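/- Fix an integer d ≥ 1, p ∈ (1,∞), a penalty function φ, and let (μ_t)_{t≥0} be a convolution semigroup in 𝒫_p(ℝ^d) with 𝒲_p(μ_t, δ_0) → 0 as t ↓ 0. Let t ≥ 0, let (t_n)_{n∈ℕ} be a sequence with t_n ∈ 2^{-n}ℕ₀, t_n ≤ t, and t_n → t, and let g, g_n ∈ C₀(ℝ^d) with ‖g_n − g‖_∞ → 0. Then lim_{n→∞} ‖𝒮^n(t_n)g_n − 𝒮(t)g‖_∞ = 0. -/

import Mathlib

open MeasureTheory Filter Topology ENNReal NNReal Set ZeroAtInfty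
noncomputable section

/-- Euclidean space ℝ^d. -/
abbrev Ed (d : ℕ) := EuclideanSpace ℝ (Fin d)

/-- `𝒫_p(ℝ^d)`: Borel probability measures with finite `p`-th moment. -/
def MemPp {d : ℕ} (p : ℝ) (μ : Measure (Ed d)) : Prop :=
  IsProbabilityMeasure μ ∧ ∫⁻ x, (‖x‖₊ : ℝ≥0∞) ^ p ∂μ < ∞

/-- `γ` is a coupling of `μ` and `ν`. -/
def IsCoupling {d : ℕ} (γ : Measure (Ed d × Ed d)) (μ ν : Measure (Ed d)) : Prop :=
  γ.map Prod.fst = μ ∧ γ.map Prod.snd = ν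

/-- The `p`-Wasserstein distance `𝒲_p(μ, ν)`. -/
def Wp {d : ℕ} (p : ℝ) (μ ν : Measure (Ed d)) : ℝ :=
  (⨅ γ ∈ {γ : Measure (Ed d × Ed d) | IsCoupling γ μ ν},
    (∫⁻ q, (‖q.2 - q.1‖₊ : ℝ≥0∞) ^ p ∂γ) ^ (1 / p)).toReal

/-- The scaled penalty `φ_t(r) = t·φ(r/t)` for `t > 0`; `φ_0(0) = 0`, `φ_0(r) = ∞` for `r > 0`. -/
def phit (φ : ℝ≥0 → ℝ≥0∞) (t : ℝ) (r : ℝ≥0) : ℝ≥0∞ :=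
  if 0 < t then (t.toNNReal : ℝ≥0∞) * φ (r / t.toNNReal) else (if r = 0 then 0 else ∞)

/-- `φ` is a penalty function: lower semicontinuous, convex, increasing, not constant,
`φ(0) = 0`, and `x ↦ φ(x^{1/p})` is convex. -/
structure IsPenalty (p : ℝ) (φ : ℝ≥0 → ℝ≥0∞) : Prop where
  lsc : LowerSemicontinuous φ
  convex : ∀ a b l m : ℝ≥0, l + m = 1 →
    φ (l * a + m * b) ≤ (l : ℝ≥0∞) * φ a + (m : ℝ≥0∞) * φ b
  mono : Monotone φ
  not_const : ∃ a b, φ a ≠ φ b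
  map_zero : φ 0 = 0
  convex_rpow : ∀ a b l m : ℝ≥0, l + m = 1 →
    φ ((l * a + m * b) ^ (1 / p)) ≤ (l : ℝ≥0∞) * φ (a ^ (1 / p)) + (m : ℝ≥0∞) * φ (b ^ (1 / p))

/-- The convex conjugate `φ*(y) = sup_{x ≥ 0} (xy − φ(x))`. -/
def phiStar (φ : ℝ≥0 → ℝ≥0∞) (y : ℝ≥0) : ℝ≥0∞ :=
  ⨆ x : ℝ≥0, ((x * y : ℝ≥0) : ℝ≥0∞) - φ x

/-- The one-step operator `S(t)f(x) = sup_ν ( ∫ f(x+y) ν(dy) − φ_t(𝒲_p(μ_t, ν)) )`. -/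
def Sop {d : ℕ} (p : ℝ) (φ : ℝ≥0 → ℝ≥0∞) (μt : Measure (Ed d)) (t : ℝ)
    (f : Ed d → ℝ) (x : Ed d) : ℝ :=
  sSup { r : ℝ | ∃ ν : Measure (Ed d), MemPp p ν ∧ ∃ c : ℝ, 0 ≤ c ∧
    phit φ t (Wp p μt ν).toNNReal ≤ ENNReal.ofReal c ∧ r = (∫ y, f (x + y) ∂ν) - c }

/-- The iterated operator `𝒮ⁿ(t) = S(2⁻ⁿ)^{∘ k} ∘ S(t − k·2⁻ⁿ)`, `k = ⌊2ⁿ t⌋`. -/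
def SiterN {d : ℕ} (p : ℝ) (φ : ℝ≥0 → ℝ≥0∞) (μ : ℝ → Measure (Ed d)) (n : ℕ) (t : ℝ)
    (f : Ed d → ℝ) : Ed d → ℝ :=
  (fun g => Sop p φ (μ ((2 : ℝ) ^ n)⁻¹) ((2 : ℝ) ^ n)⁻¹ g)^[⌊(2:ℝ)^n * t⌋₊]
    (Sop p φ (μ (t - ⌊(2:ℝ)^n * t⌋₊ * ((2:ℝ)^n)⁻¹)) (t - ⌊(2:ℝ)^n * t⌋₊ * ((2:ℝ)^n)⁻¹) f)

/-- The limiting operator `𝒮(t)f = lim_n 𝒮ⁿ(t)f` (a decreasing limit, i.e. an infimum). -/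
def Slim {d : ℕ} (p : ℝ) (φ : ℝ≥0 → ℝ≥0∞) (μ : ℝ → Measure (Ed d)) (t : ℝ)
    (f : Ed d → ℝ) (x : Ed d) : ℝ :=
  ⨅ n : ℕ, SiterN p φ μ n t f x

/-- `f ∈ C₀(ℝ^d)`: continuous and vanishing at infinity. -/
def IsC0 {d : ℕ} (f : Ed d → ℝ) : Prop :=
  Continuous f ∧ Tendsto f (cocompact (Ed d)) (𝓝 0)

/-- `(μ_t)_{t ≥ 0}` is a convolution semigroup in `𝒫_p(ℝ^d)`. -/
def IsConvSemigroup {d : ℕ} (p : ℝ) (μ : ℝ → Measure (Ed d)) : Prop :=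
  μ 0 = Measure.dirac 0 ∧ (∀ s t : ℝ, 0 ≤ s → 0 ≤ t → μ (s + t) = (μ s).conv (μ t)) ∧
    ∀ t : ℝ, 0 ≤ t → MemPp p (μ t)

/-- `𝒲_p(μ_t, δ_0) → 0` as `t ↓ 0`. -/
def WContinuousAtZero {d : ℕ} (p : ℝ) (μ : ℝ → Measure (Ed d)) : Prop :=
  Tendsto (fun t => Wp p (μ t) (Measure.dirac 0)) (𝓝[>] (0:ℝ)) (𝓝 0)

/-- The semigroup of the underlying Lévy process, `S^μ(t)f(x) = ∫ f(x+y) μ_t(dy)`. -/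
def Smu {d : ℕ} (μ : ℝ → Measure (Ed d)) (t : ℝ) (f : Ed d → ℝ) (x : Ed d) : ℝ :=
  ∫ y, f (x + y) ∂(μ t)

/-- `f ∈ D(A^μ)` with `A^μ f = Af`: `(S^μ(t)f − f)/t → Af` uniformly as `t ↓ 0`. -/
def HasGenerator {d : ℕ} (μ : ℝ → Measure (Ed d)) (f Af : Ed d → ℝ) : Prop :=
  TendstoUniformly (fun t x => (Smu μ t f x - f x) / t) Af (𝓝[>] (0:ℝ))

/-- `f ∈ C₀¹(ℝ^d)`: continuously differentiable, vanishing at infinity, with gradient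
vanishing at infinity. -/
def IsC01 {d : ℕ} (f : Ed d → ℝ) : Prop :=
  IsC0 f ∧ ContDiff ℝ 1 f ∧ Tendsto (fun x => gradient f x) (cocompact (Ed d)) (𝓝 0)



/-- real form of the penalty inequality -/
def Pen (φ : ℝ≥0 → ℝ≥0∞) (t r c : ℝ) : Prop :=
  phit φ t r.toNNReal ≤ ENNReal.ofReal c

lemma pen_pos_iff (φ : ℝ≥0 → ℝ≥0∞) {t r c : ℝ} (ht : 0 < t) (hr : 0 ≤ r) :
    Pen φ t r c ↔ φ (r / t).toNNReal ≤ ENNReal.ofReal (c / t) := by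
  unfold Pen phit
  rw [if_pos ht, Real.toNNReal_div hr, ENNReal.ofReal_div_of_pos ht,
    ENNReal.le_div_iff_mul_le (Or.inl (by simpa using ht)) (Or.inl (by simp)), mul_comm]
  rfl

lemma pen_zero_iff (φ : ℝ≥0 → ℝ≥0∞) {r c : ℝ} (hr : 0 ≤ r) :
    Pen φ 0 r c ↔ r = 0 := by
  unfold Pen phit
  rw [if_neg (lt_irrefl _)]
  by_cases h : r = 0
  · simp [h]
  · have : ¬ r.toNNReal = 0 := by
      simp; exact lt_of_le_of_ne hr (Ne.symm h)
    rw [if_neg this]; simp [h]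

lemma pen_refl {p : ℝ} {φ : ℝ≥0 → ℝ≥0∞} (hφ : IsPenalty p φ) {t : ℝ} :
    Pen φ t 0 0 := by
  unfold Pen phit
  split_ifs <;> simp_all [hφ.map_zero]

lemma pen_mono {p : ℝ} {φ : ℝ≥0 → ℝ≥0∞} (hφ : IsPenalty p φ) {t r r' c c' : ℝ} (ht : 0 < t)
    (hr : r ≤ r') (hc : c ≤ c') (h : Pen φ t r' c) : Pen φ t r c' := by
  unfold Pen phit at *
  rw [if_pos ht] at *
  refine le_trans ?_ (h.trans (ENNReal.ofReal_le_ofReal hc))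
  gcongr
  exact hφ.mono (by gcongr)

lemma pen_add {p : ℝ} {φ : ℝ≥0 → ℝ≥0∞} (hφ : IsPenalty p φ) {s t a b c e : ℝ} (hs : 0 < s)
    (ht : 0 < t) (ha : 0 ≤ a) (hb : 0 ≤ b) (hc : 0 ≤ c) (he : 0 ≤ e)
    (h1 : Pen φ s a c) (h2 : Pen φ t b e) : Pen φ (s + t) (a + b) (c + e) := by
  rw [pen_pos_iff φ (by positivity) (by positivity)] at *
  have hst : 0 < s + t := by positivity
  have hlm : (s / (s+t)).toNNReal + (t / (s+t)).toNNReal = 1 := by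
    rw [← Real.toNNReal_add (by positivity) (by positivity), ← add_div, div_self hst.ne']
    simp
  have key := hφ.convex (a / s).toNNReal (b / t).toNNReal _ _ hlm
  rw [← Real.toNNReal_mul (by positivity), ← Real.toNNReal_mul (by positivity),
    ← Real.toNNReal_add (by positivity) (by positivity)] at key
  have e1 : s / (s + t) * (a / s) + t / (s + t) * (b / t) = (a + b) / (s + t) := by
    field_simp
  rw [e1] at key
  refine key.trans ?_
  have e2 : (c + e) / (s + t) = s / (s + t) * (c / s) + t / (s + t) * (e / t) := by
    field_simp
  rw [e2, ENNReal.ofReal_add (by positivity) (by positivity),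
    ENNReal.ofReal_mul (by positivity), ENNReal.ofReal_mul (by positivity)]
  gcongr <;> exact le_rfl

/-- epigraph of `x ↦ φ (x^{1/p})` -/
def Epi (p : ℝ) (φ : ℝ≥0 → ℝ≥0∞) : Set (ℝ × ℝ) :=
  {z | 0 ≤ z.1 ∧ 0 ≤ z.2 ∧ φ (z.1.toNNReal ^ (1 / p)) ≤ ENNReal.ofReal z.2}

lemma epi_convex {p : ℝ} {φ : ℝ≥0 → ℝ≥0∞} (hφ : IsPenalty p φ) : Convex ℝ (Epi p φ) := by
  rintro ⟨x, c⟩ ⟨hx, hc, h⟩ ⟨y, e⟩ ⟨hy, he, h'⟩ l m hl hm hlm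
  simp only at hx hc h hy he h'
  refine ⟨by simp; positivity, by simp; positivity, ?_⟩
  simp only [Prod.smul_mk, Prod.mk_add_mk, smul_eq_mul]
  have key := hφ.convex_rpow x.toNNReal y.toNNReal l.toNNReal m.toNNReal
    (by rw [← Real.toNNReal_add hl hm, hlm]; simp)
  rw [← Real.toNNReal_mul hl, ← Real.toNNReal_mul hm,
    ← Real.toNNReal_add (by positivity) (by positivity)] at key
  refine key.trans ?_
  rw [ENNReal.ofReal_add (by positivity) (by positivity),
    ENNReal.ofReal_mul (by positivity), ENNReal.ofReal_mul (by positivity)]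
  gcongr <;> exact le_rfl

lemma epi_closed {p : ℝ} (hp : 1 < p) {φ : ℝ≥0 → ℝ≥0∞} (hφ : IsPenalty p φ) :
    IsClosed (Epi p φ) := by
  have h1 : IsClosed {q : ℝ≥0 × ℝ≥0∞ | φ q.1 ≤ q.2} := hφ.lsc.isClosed_epigraph
  have hcont : Continuous fun z : ℝ × ℝ =>
      ((z.1.toNNReal ^ (1 / p), ENNReal.ofReal z.2) : ℝ≥0 × ℝ≥0∞) := by
    refine Continuous.prodMk ?_ (ENNReal.continuous_ofReal.comp continuous_snd)
    exact (NNReal.continuous_rpow_const (by positivity)).comp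
      (continuous_real_toNNReal.comp continuous_fst)
  exact (isClosed_le continuous_const continuous_fst).inter
    ((isClosed_le continuous_const continuous_snd).inter (h1.preimage hcont))

lemma exists_superlinear {p : ℝ} (hp : 1 < p) {φ : ℝ≥0 → ℝ≥0∞} (hφ : IsPenalty p φ) (C : ℝ)
    (hC : 0 ≤ C) : ∃ K : ℝ, 0 ≤ K ∧ ∀ r c : ℝ, 0 ≤ r → 0 ≤ c →
      φ r.toNNReal ≤ ENNReal.ofReal c → C * r ≤ c + K := by
  have hp0 : 0 < p := by linarith
  obtain ⟨r0, hr0⟩ : ∃ r0, 0 < φ r0 := by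
    obtain ⟨a, b, hab⟩ := hφ.not_const
    by_contra! h
    exact hab (by rw [le_antisymm (h a) bot_le, le_antisymm (h b) bot_le])
  have hr0pos : 0 < r0 := by
    rcases eq_or_ne r0 0 with h | h
    · rw [h, hφ.map_zero] at hr0; exact absurd hr0 (lt_irrefl _)
    · exact pos_iff_ne_zero.mpr h
  obtain ⟨a, ha, ha'⟩ := ENNReal.lt_iff_exists_nnreal_btwn.mp hr0
  have hapos : (0:ℝ) < a := by exact_mod_cast ha
  -- key bound for r ≥ r0
  have key : ∀ r c : ℝ, (r0 : ℝ) ≤ r → 0 ≤ c → φ r.toNNReal ≤ ENNReal.ofReal c →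
      (a : ℝ) * (r / r0) ^ p ≤ c := by
    intro r c hr hc h
    have hrpos : 0 < r := lt_of_lt_of_le (by exact_mod_cast hr0pos) hr
    set l : ℝ≥0 := (r0 / r.toNNReal) ^ p with hl
    have hl1 : l ≤ 1 := by
      apply NNReal.rpow_le_one _ hp0.le
      apply div_le_one_of_le₀ _ bot_le
      rw [← NNReal.coe_le_coe, Real.coe_toNNReal _ hrpos.le]; exact hr
    have hrn : r.toNNReal ≠ 0 := by simpa using hrpos
    have k := hφ.convex_rpow (r.toNNReal ^ p) 0 l (1 - l) (add_tsub_cancel_of_le hl1)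
    have e1 : (l * r.toNNReal ^ p + (1 - l) * 0) ^ (1 / p) = r0 := by
      rw [mul_zero, add_zero, hl, ← NNReal.mul_rpow, div_mul_cancel₀ _ hrn, one_div,
        NNReal.rpow_rpow_inv hp0.ne']
    rw [e1, one_div, NNReal.rpow_rpow_inv hp0.ne', NNReal.zero_rpow (by positivity), hφ.map_zero,
      mul_zero, add_zero] at k
    have k2 : (a : ℝ≥0∞) ≤ l * ENNReal.ofReal c := ha'.le.trans (k.trans (by gcongr))
    have k3 : (a : ℝ) ≤ l * c := by
      have : (a : ℝ≥0∞) ≤ ((l * c.toNNReal : ℝ≥0) : ℝ≥0∞) := by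
        push_cast; exact k2
      have := ENNReal.coe_le_coe.mp this
      have := NNReal.coe_le_coe.mpr this
      push_cast at this
      rwa [Real.coe_toNNReal _ hc] at this
    have e2 : (l : ℝ) = (r0 / r) ^ p := by
      rw [hl]; push_cast; rw [Real.coe_toNNReal _ hrpos.le]
    rw [e2] at k3
    have hr0' : (0:ℝ) < r0 := by exact_mod_cast hr0pos
    have e3 : ((r0:ℝ) / r) ^ p * (r / r0) ^ p = 1 := by
      rw [← Real.mul_rpow (by positivity) (by positivity)]
      rw [show (r0:ℝ) / r * (r / r0) = 1 by field_simp]; simp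
    calc (a:ℝ) * (r / r0) ^ p ≤ ((r0 / r) ^ p * c) * (r / r0) ^ p := by gcongr
      _ = c * ((r0 / r) ^ p * (r / r0) ^ p) := by ring
      _ = c := by rw [e3, mul_one]
  have hr0' : (0:ℝ) < r0 := by exact_mod_cast hr0pos
  -- threshold
  set L : ℝ := 1 + (C * r0 / a) ^ (1 / (p - 1)) with hL
  have hL0 : 1 ≤ L := by rw [hL]; linarith [Real.rpow_nonneg (show 0 ≤ C * r0 / a by positivity) (1 / (p - 1))]
  refine ⟨C * (L * r0), by positivity, ?_⟩
  intro r c hr hc h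
  by_cases hrL : r ≤ L * r0
  · nlinarith [mul_le_mul_of_nonneg_left hrL hC]
  · push Not at hrL
    have h1 : (r0:ℝ) ≤ r := by nlinarith
    have h2 := key r c h1 hc h
    set q := r / r0 with hq
    have hqL : L < q := by rw [hq, lt_div_iff₀ hr0']; exact hrL
    have hq0 : 0 < q := by linarith
    have h3 : C * r0 / a ≤ q ^ (p - 1) := by
      have : (C * r0 / a) ^ (1 / (p - 1)) ≤ q := by linarith
      calc C * r0 / a = ((C * r0 / a) ^ (1 / (p - 1))) ^ (p - 1) := by
            rw [← Real.rpow_mul (by positivity), one_div, inv_mul_cancel₀ (by linarith), Real.rpow_one]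
        _ ≤ q ^ (p - 1) := by gcongr
    have h4 : q ^ p = q ^ (p - 1) * q := by
      rw [← Real.rpow_add_one hq0.ne']; ring_nf
    have h5 : C * r0 ≤ a * q ^ (p - 1) := by
      rw [div_le_iff₀ hapos] at h3; linarith
    have h6 : r = q * r0 := by rw [hq]; field_simp
    have : C * r ≤ c := by
      calc C * r = (C * r0) * q := by rw [h6]; ring
        _ ≤ (a * q ^ (p - 1)) * q := by gcongr
        _ = a * q ^ p := by rw [h4]; ring
        _ ≤ c := h2
    have : 0 ≤ C * (L * r0) := by positivity
    linarith

lemma pen_superlinear {p : ℝ} (hp : 1 < p) {φ : ℝ≥0 → ℝ≥0∞} (hφ : IsPenalty p φ) (C : ℝ)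
    (hC : 0 ≤ C) : ∃ K : ℝ, 0 ≤ K ∧ ∀ t r c : ℝ, 0 ≤ t → 0 ≤ r → 0 ≤ c →
      Pen φ t r c → C * r ≤ c + t * K := by
  obtain ⟨K, hK, h⟩ := exists_superlinear hp hφ C hC
  refine ⟨K, hK, fun t r c ht hr hc hP => ?_⟩
  rcases ht.eq_or_lt with rfl | ht
  · rw [pen_zero_iff φ hr] at hP
    subst hP; simp; exact hc
  · rw [pen_pos_iff φ ht hr] at hP
    have := h (r / t) (c / t) (by positivity) (by positivity) hP
    have h2 : t * (C * (r / t)) ≤ t * (c / t + K) := by gcongr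
    have e1 : t * (C * (r / t)) = C * r := by field_simp
    have e2 : t * (c / t + K) = c + t * K := by field_simp
    linarith

lemma lint_eq_eLpNorm {α : Type*} [MeasurableSpace α] {d : ℕ} {p : ℝ} (hp : 1 < p)
    (γ : Measure α) (F : α → Ed d) :
    (∫⁻ q, (‖F q‖₊ : ℝ≥0∞) ^ p ∂γ) ^ (1 / p) = eLpNorm F (ENNReal.ofReal p) γ := by
  rw [eLpNorm_eq_lintegral_rpow_enorm_toReal (by simp; linarith) (by simp),
    ENNReal.toReal_ofReal (by linarith)]
  rfl

lemma memLp_of_memPp {d : ℕ} {p : ℝ} (hp : 1 < p) {μ : Measure (Ed d)} (h : MemPp p μ) :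
    MemLp (fun x : Ed d => x) (ENNReal.ofReal p) μ := by
  refine ⟨by fun_prop, ?_⟩
  rw [← lint_eq_eLpNorm hp]
  exact ENNReal.rpow_lt_top_of_nonneg (by positivity) h.2.ne

lemma memPp_of_memLp {d : ℕ} {p : ℝ} (hp : 1 < p) {μ : Measure (Ed d)} [IsProbabilityMeasure μ]
    (h : MemLp (fun x : Ed d => x) (ENNReal.ofReal p) μ) : MemPp p μ := by
  refine ⟨inferInstance, ?_⟩
  have h2 := h.2
  rw [← lint_eq_eLpNorm hp] at h2
  exact (ENNReal.rpow_lt_top_iff_of_pos (by positivity)).mp h2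

lemma Wp_nonneg {d : ℕ} (p : ℝ) (μ ν : Measure (Ed d)) : 0 ≤ Wp p μ ν := ENNReal.toReal_nonneg

lemma Wp_le {d : ℕ} {p : ℝ} (hp : 1 < p) {μ ν : Measure (Ed d)} {γ : Measure (Ed d × Ed d)}
    (hγ : IsCoupling γ μ ν) {a : ℝ} (ha : 0 ≤ a)
    (h : eLpNorm (fun q : Ed d × Ed d => q.2 - q.1) (ENNReal.ofReal p) γ ≤ ENNReal.ofReal a) :
    Wp p μ ν ≤ a := by
  unfold Wp
  refine ENNReal.toReal_le_of_le_ofReal ha ?_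
  refine (iInf₂_le γ hγ).trans ?_
  rw [lint_eq_eLpNorm hp γ (fun q : Ed d × Ed d => q.2 - q.1)]
  exact h

lemma Wp_self {d : ℕ} {p : ℝ} (hp : 1 < p) (μ : Measure (Ed d)) : Wp p μ μ = 0 := by
  refine le_antisymm ?_ (Wp_nonneg _ _ _)
  refine Wp_le hp (γ := μ.map (fun x => (x, x))) ⟨?_, ?_⟩ le_rfl ?_
  · rw [Measure.map_map (by fun_prop) (by fun_prop)]
    exact Measure.map_id
  · rw [Measure.map_map (by fun_prop) (by fun_prop)]
    exact Measure.map_id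
  · rw [eLpNorm_map_measure (by fun_prop) (by fun_prop)]
    simp [Function.comp_def]

lemma isProb_of_coupling {d : ℕ} {μ ν : Measure (Ed d)} [IsProbabilityMeasure μ]
    {γ : Measure (Ed d × Ed d)} (hγ : IsCoupling γ μ ν) : IsProbabilityMeasure γ := by
  constructor
  have : γ.map Prod.fst univ = 1 := by rw [hγ.1]; simp
  rwa [Measure.map_apply (by fun_prop) MeasurableSet.univ, preimage_univ] at this

lemma exists_coupling {d : ℕ} {p : ℝ} (hp : 1 < p) {μ ν : Measure (Ed d)} (hμ : MemPp p μ)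
    (hν : MemPp p ν) {δ : ℝ} (hδ : 0 < δ) :
    ∃ γ : Measure (Ed d × Ed d), IsCoupling γ μ ν ∧
      eLpNorm (fun q : Ed d × Ed d => q.2 - q.1) (ENNReal.ofReal p) γ
        ≤ ENNReal.ofReal (Wp p μ ν + δ) := by
  have := hμ.1
  have := hν.1
  have hp1 : 1 ≤ ENNReal.ofReal p := by simpa using hp.le
  set I := (⨅ γ ∈ {γ : Measure (Ed d × Ed d) | IsCoupling γ μ ν},
    (∫⁻ q, (‖q.2 - q.1‖₊ : ℝ≥0∞) ^ p ∂γ) ^ (1 / p)) with hI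
  have hfin : I ≠ ∞ := by
    have hc : IsCoupling (μ.prod ν) μ ν := ⟨by simp [Measure.map_fst_prod], by simp [Measure.map_snd_prod]⟩
    refine ((iInf₂_le (μ.prod ν) hc).trans_lt ?_).ne
    rw [lint_eq_eLpNorm hp _ (fun q : Ed d × Ed d => q.2 - q.1)]
    have h1 : MemLp (fun q : Ed d × Ed d => q.1) (ENNReal.ofReal p) (μ.prod ν) := by
      have := memLp_of_memPp hp hμ
      rw [← hc.1] at this
      exact (memLp_map_measure_iff (g := fun x : Ed d => x) (by fun_prop) (by fun_prop)).mp this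
    have h2 : MemLp (fun q : Ed d × Ed d => q.2) (ENNReal.ofReal p) (μ.prod ν) := by
      have := memLp_of_memPp hp hν
      rw [← hc.2] at this
      exact (memLp_map_measure_iff (g := fun x : Ed d => x) (by fun_prop) (by fun_prop)).mp this
    exact (h2.sub h1).2
  have hW : Wp p μ ν = I.toReal := rfl
  have hlt : I < ENNReal.ofReal (Wp p μ ν + δ) := by
    rw [hW, ENNReal.lt_ofReal_iff_toReal_lt hfin]; linarith
  rw [hI, iInf_lt_iff] at hlt
  obtain ⟨γ, hlt⟩ := hlt
  rw [iInf_lt_iff] at hlt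
  obtain ⟨hγ, hlt⟩ := hlt
  refine ⟨γ, hγ, ?_⟩
  rw [lint_eq_eLpNorm hp _ (fun q : Ed d × Ed d => q.2 - q.1)] at hlt
  exact hlt.le

lemma integrable_norm_of_memPp {d : ℕ} {p : ℝ} (hp : 1 < p) {μ : Measure (Ed d)}
    (h : MemPp p μ) : Integrable (fun x : Ed d => ‖x‖) μ := by
  have := h.1
  exact ((memLp_of_memPp hp h).integrable (by simpa using hp.le)).norm

lemma mean_le {d : ℕ} {p : ℝ} (hp : 1 < p) {μ ν : Measure (Ed d)} (hμ : MemPp p μ)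
    (hν : MemPp p ν) : ∫ y, ‖y‖ ∂ν ≤ ∫ x, ‖x‖ ∂μ + Wp p μ ν := by
  have := hμ.1
  have := hν.1
  refine le_of_forall_pos_le_add fun δ hδ => ?_
  obtain ⟨γ, hγ, hle⟩ := exists_coupling hp hμ hν hδ
  have := isProb_of_coupling hγ
  have e1 : ∫ y, ‖y‖ ∂ν = ∫ q, ‖q.2‖ ∂γ := by
    rw [← hγ.2, integral_map (by fun_prop) (by fun_prop)]
  have e2 : ∫ y, ‖y‖ ∂μ = ∫ q, ‖q.1‖ ∂γ := by
    rw [← hγ.1, integral_map (by fun_prop) (by fun_prop)]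
  have i1 : Integrable (fun q : Ed d × Ed d => ‖q.1‖) γ := by
    have := integrable_norm_of_memPp hp hμ
    rw [← hγ.1] at this
    exact (integrable_map_measure (by fun_prop) (by fun_prop)).mp this
  have hM : MemLp (fun q : Ed d × Ed d => q.2 - q.1) (ENNReal.ofReal p) γ :=
    ⟨by fun_prop, hle.trans_lt (by simp)⟩
  have i3 : Integrable (fun q : Ed d × Ed d => q.2 - q.1) γ := hM.integrable (by simpa using hp.le)
  have hb : ∫ q, ‖q.2 - q.1‖ ∂γ ≤ Wp p μ ν + δ := by
    have h1 : eLpNorm (fun q : Ed d × Ed d => q.2 - q.1) 1 γ ≤ ENNReal.ofReal (Wp p μ ν + δ) :=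
      (eLpNorm_le_eLpNorm_of_exponent_le (by simpa using hp.le) (by fun_prop)).trans hle
    rw [integral_norm_eq_lintegral_enorm (by fun_prop), ← eLpNorm_one_eq_lintegral_enorm]
    exact ENNReal.toReal_le_of_le_ofReal (by have := Wp_nonneg p μ ν; positivity) h1
  rw [e1, e2]
  calc ∫ q, ‖q.2‖ ∂γ ≤ ∫ q, (‖q.1‖ + ‖q.2 - q.1‖) ∂γ := by
        refine integral_mono_of_nonneg (by filter_upwards with q; positivity) (i1.add i3.norm) ?_
        filter_upwards with q
        calc ‖q.2‖ = ‖q.1 + (q.2 - q.1)‖ := by congr 1; abel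
          _ ≤ _ := norm_add_le _ _
    _ = ∫ q, ‖q.1‖ ∂γ + ∫ q, ‖q.2 - q.1‖ ∂γ := integral_add i1 i3.norm
    _ ≤ _ := by linarith

lemma Wp_comm_le {d : ℕ} {p : ℝ} (hp : 1 < p) {μ ν : Measure (Ed d)} (hμ : MemPp p μ)
    (hν : MemPp p ν) : Wp p μ ν ≤ Wp p ν μ := by
  refine le_of_forall_pos_le_add fun δ hδ => ?_
  obtain ⟨γ, hγ, hle⟩ := exists_coupling hp hν hμ hδ
  refine Wp_le hp (γ := γ.map Prod.swap) ⟨?_, ?_⟩ (by have := Wp_nonneg p ν μ; positivity) ?_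
  · rw [Measure.map_map (by fun_prop) (by fun_prop)]; exact hγ.2
  · rw [Measure.map_map (by fun_prop) (by fun_prop)]; exact hγ.1
  · rw [eLpNorm_map_measure (by fun_prop) (by fun_prop)]
    refine le_trans (le_of_eq ?_) hle
    rw [← eLpNorm_neg]
    congr 1
    ext q : 1
    simp

lemma memPp_dirac {d : ℕ} {p : ℝ} (hp : 1 < p) : MemPp p (Measure.dirac (0 : Ed d)) := by
  refine ⟨inferInstance, ?_⟩
  rw [lintegral_dirac]
  simp [ENNReal.zero_rpow_of_pos (show 0 < p by linarith)]

lemma mean_le_Wp_dirac {d : ℕ} {p : ℝ} (hp : 1 < p) {μ : Measure (Ed d)} (hμ : MemPp p μ) :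
    ∫ x, ‖x‖ ∂μ ≤ Wp p μ (Measure.dirac 0) := by
  have h1 := mean_le hp (memPp_dirac hp) hμ
  have h2 := Wp_comm_le hp (memPp_dirac (d := d) hp) hμ
  simp at h1
  linarith

structure BUC {d : ℕ} (f : Ed d → ℝ) : Prop where
  bdd : ∃ M : ℝ, ∀ x, |f x| ≤ M
  uc : UniformContinuous f

lemma BUC.integrable {d : ℕ} {f : Ed d → ℝ} (hf : BUC f) (x : Ed d) (ν : Measure (Ed d))
    [IsProbabilityMeasure ν] : Integrable (fun y => f (x + y)) ν := by
  obtain ⟨M, hM⟩ := hf.bdd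
  have hc := hf.uc.continuous
  exact Integrable.of_bound (C := M) (by fun_prop) (by filter_upwards with y; exact hM _)

lemma abs_integral_le {d : ℕ} {f : Ed d → ℝ} {M : ℝ} (hM : ∀ x, |f x| ≤ M) (x : Ed d)
    (ν : Measure (Ed d)) [IsProbabilityMeasure ν] : |∫ y, f (x + y) ∂ν| ≤ M := by
  have := norm_integral_le_of_norm_le_const (μ := ν) (f := fun y => f (x + y)) (C := M)
    (by filter_upwards with y; exact hM _)
  simpa using this

section
variable {d : ℕ} {p : ℝ} {φ : ℝ≥0 → ℝ≥0∞} {μt : Measure (Ed d)} {t : ℝ}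

lemma le_Sop {f : Ed d → ℝ} {M : ℝ} (hM : ∀ x, |f x| ≤ M) (x : Ed d) {ν : Measure (Ed d)}
    (hν : MemPp p ν) {c : ℝ} (hc : 0 ≤ c) (hP : Pen φ t (Wp p μt ν) c) :
    (∫ y, f (x + y) ∂ν) - c ≤ Sop p φ μt t f x := by
  refine le_csSup ⟨M, ?_⟩ ⟨ν, hν, c, hc, hP, rfl⟩
  rintro r ⟨ν', hν', c', hc', -, rfl⟩
  have := hν'.1
  have := (abs_le.mp (abs_integral_le hM x ν')).2
  linarith

lemma Sop_nonempty (hp : 1 < p) (hφ : IsPenalty p φ) (hμt : MemPp p μt) (f : Ed d → ℝ)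
    (x : Ed d) : { r : ℝ | ∃ ν : Measure (Ed d), MemPp p ν ∧ ∃ c : ℝ, 0 ≤ c ∧
    phit φ t (Wp p μt ν).toNNReal ≤ ENNReal.ofReal c ∧ r = (∫ y, f (x + y) ∂ν) - c }.Nonempty := by
  refine ⟨_, μt, hμt, 0, le_rfl, ?_, rfl⟩
  rw [Wp_self hp]
  exact pen_refl hφ

lemma Sop_le (hp : 1 < p) (hφ : IsPenalty p φ) (hμt : MemPp p μt) {f : Ed d → ℝ}
    {x : Ed d} {b : ℝ} (h : ∀ (ν : Measure (Ed d)) (c : ℝ), MemPp p ν → 0 ≤ c →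
      Pen φ t (Wp p μt ν) c → (∫ y, f (x + y) ∂ν) - c ≤ b) : Sop p φ μt t f x ≤ b := by
  refine csSup_le (Sop_nonempty hp hφ hμt f x) ?_
  rintro r ⟨ν', hν', c', hc', hP, rfl⟩
  exact h ν' c' hν' hc' hP

lemma exists_near (hp : 1 < p) (hφ : IsPenalty p φ) (hμt : MemPp p μt) (f : Ed d → ℝ)
    (x : Ed d) {ε : ℝ} (hε : 0 < ε) : ∃ (ν : Measure (Ed d)) (c : ℝ), MemPp p ν ∧ 0 ≤ c ∧
      Pen φ t (Wp p μt ν) c ∧ Sop p φ μt t f x - ε < (∫ y, f (x + y) ∂ν) - c := by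
  obtain ⟨r, ⟨ν', hν', c', hc', hP, rfl⟩, hr⟩ :=
    exists_lt_of_lt_csSup (Sop_nonempty (t := t) hp hφ hμt f x)
      (show Sop p φ μt t f x - ε < sSup _ from sub_lt_self _ hε)
  exact ⟨ν', c', hν', hc', hP, hr⟩

lemma mean_le_Sop (hp : 1 < p) (hφ : IsPenalty p φ) (hμt : MemPp p μt) {f : Ed d → ℝ}
    (hf : BUC f) (x : Ed d) : ∫ y, f (x + y) ∂μt ≤ Sop p φ μt t f x := by
  obtain ⟨M, hM⟩ := hf.bdd
  have := le_Sop (φ := φ) (t := t) (μt := μt) hM x hμt le_rfl (by rw [Wp_self hp]; exact pen_refl hφ)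
  linarith

lemma Sop_le_add (hp : 1 < p) (hφ : IsPenalty p φ) (hμt : MemPp p μt) {f g : Ed d → ℝ}
    (hf : BUC f) (hg : BUC g) {ε : ℝ} (h : ∀ x, f x ≤ g x + ε) (x : Ed d) :
    Sop p φ μt t f x ≤ Sop p φ μt t g x + ε := by
  refine Sop_le hp hφ hμt fun ν c hν hc hP => ?_
  have := hν.1
  obtain ⟨M, hM⟩ := hg.bdd
  have h1 := le_Sop hM x hν hc hP
  have h2 : ∫ y, f (x + y) ∂ν ≤ ∫ y, (g (x + y) + ε) ∂ν :=
    integral_mono (hf.integrable x ν) ((hg.integrable x ν).add (integrable_const _))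
      (fun y => h _)
  rw [integral_add (hg.integrable x ν) (integrable_const _)] at h2
  simp at h2
  linarith

lemma Sop_mono (hp : 1 < p) (hφ : IsPenalty p φ) (hμt : MemPp p μt) {f g : Ed d → ℝ}
    (hf : BUC f) (hg : BUC g) (h : ∀ x, f x ≤ g x) (x : Ed d) :
    Sop p φ μt t f x ≤ Sop p φ μt t g x := by
  have := Sop_le_add (t := t) hp hφ hμt hf hg (ε := 0) (by simpa using h) x
  simpa using this

lemma Sop_contr (hp : 1 < p) (hφ : IsPenalty p φ) (hμt : MemPp p μt) {f g : Ed d → ℝ}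
    (hf : BUC f) (hg : BUC g) {ε : ℝ} (h : ∀ x, |f x - g x| ≤ ε) (x : Ed d) :
    |Sop p φ μt t f x - Sop p φ μt t g x| ≤ ε := by
  have h1 := Sop_le_add (t := t) hp hφ hμt hf hg (ε := ε)
    (fun x => by have := (abs_le.mp (h x)).2; linarith) x
  have h2 := Sop_le_add (t := t) hp hφ hμt hg hf (ε := ε)
    (fun x => by have := (abs_le.mp (h x)).1; linarith) x
  rw [abs_le]; constructor <;> linarith

lemma Sop_bound (hp : 1 < p) (hφ : IsPenalty p φ) (hμt : MemPp p μt) {f : Ed d → ℝ}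
    {M : ℝ} (hM : ∀ x, |f x| ≤ M) (x : Ed d) : |Sop p φ μt t f x| ≤ M := by
  rw [abs_le]; constructor
  · have := hμt.1
    have h1 := le_Sop (φ := φ) (t := t) (μt := μt) hM x hμt le_rfl
      (by rw [Wp_self hp]; exact pen_refl hφ)
    have := (abs_le.mp (abs_integral_le hM x μt)).1
    linarith
  · refine Sop_le hp hφ hμt fun ν c hν hc hP => ?_
    have := hν.1
    have := (abs_le.mp (abs_integral_le hM x ν)).2
    linarith

lemma BUC.shift {f : Ed d → ℝ} (hf : BUC f) (h : Ed d) : BUC (fun z => f (z + h)) := by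
  obtain ⟨M, hM⟩ := hf.bdd
  exact ⟨⟨M, fun x => hM _⟩, hf.uc.comp (uniformContinuous_id.add uniformContinuous_const)⟩

lemma Sop_modulus (hp : 1 < p) (hφ : IsPenalty p φ) (hμt : MemPp p μt) {f : Ed d → ℝ}
    (hf : BUC f) {h : Ed d} {ε : ℝ} (hh : ∀ z, |f (z + h) - f z| ≤ ε) (z : Ed d) :
    |Sop p φ μt t f (z + h) - Sop p φ μt t f z| ≤ ε := by
  have e : Sop p φ μt t f (z + h) = Sop p φ μt t (fun z => f (z + h)) z := by
    have h1 : ∀ y, f (z + h + y) = f (z + y + h) := fun y => by rw [add_right_comm]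
    simp only [Sop, h1]
  rw [e]
  exact Sop_contr hp hφ hμt (hf.shift h) hf hh z

lemma BUC.modulus {f : Ed d → ℝ} (hf : BUC f) {ε : ℝ} (hε : 0 < ε) :
    ∃ δ > 0, ∀ h : Ed d, ‖h‖ < δ → ∀ z, |f (z + h) - f z| ≤ ε := by
  obtain ⟨δ, hδ, H⟩ := Metric.uniformContinuous_iff.mp hf.uc ε hε
  refine ⟨δ, hδ, fun h hh z => ?_⟩
  have := H (a := z + h) (b := z) (by simpa [dist_eq_norm] using hh)
  rw [Real.dist_eq] at this
  exact this.le

lemma uc_of_modulus {f : Ed d → ℝ}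
    (H : ∀ ε > 0, ∃ δ > 0, ∀ h : Ed d, ‖h‖ < δ → ∀ z, |f (z + h) - f z| ≤ ε) :
    UniformContinuous f := by
  rw [Metric.uniformContinuous_iff]
  intro ε hε
  obtain ⟨δ, hδ, H⟩ := H (ε / 2) (by positivity)
  refine ⟨δ, hδ, fun a b hab => ?_⟩
  have := H (a - b) (by rwa [← dist_eq_norm]) b
  rw [add_sub_cancel] at this
  rw [Real.dist_eq]; linarith

lemma Sop_BUC (hp : 1 < p) (hφ : IsPenalty p φ) (hμt : MemPp p μt) {f : Ed d → ℝ}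
    (hf : BUC f) : BUC (Sop p φ μt t f) := by
  obtain ⟨M, hM⟩ := hf.bdd
  refine ⟨⟨M, Sop_bound hp hφ hμt hM⟩, uc_of_modulus fun ε hε => ?_⟩
  obtain ⟨δ, hδ, H⟩ := hf.modulus hε
  exact ⟨δ, hδ, fun h hh => Sop_modulus hp hφ hμt hf (H h hh)⟩

lemma BUC.growth {f : Ed d → ℝ} (hf : BUC f) {ε : ℝ} (hε : 0 < ε) :
    ∃ C : ℝ, 0 ≤ C ∧ ∀ x y, |f (x + y) - f x| ≤ ε + C * ‖y‖ := by
  obtain ⟨δ, hδ, H⟩ := hf.modulus hε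
  obtain ⟨M, hM⟩ := hf.bdd
  have hM0 : 0 ≤ M := (abs_nonneg _).trans (hM 0)
  refine ⟨2 * M / δ, by positivity, fun x y => ?_⟩
  by_cases hy : ‖y‖ < δ
  · have := H y hy x
    have : 0 ≤ 2 * M / δ * ‖y‖ := by positivity
    linarith
  · push Not at hy
    have h1 : |f (x + y) - f x| ≤ 2 * M := by
      have := abs_sub (f (x+y)) (f x)
      linarith [hM (x + y), hM x]
    have h2 : 2 * M ≤ 2 * M / δ * ‖y‖ := by
      rw [div_mul_eq_mul_div, le_div_iff₀ hδ]
      gcongr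
    linarith

lemma mean_dist {f : Ed d → ℝ} (hp : 1 < p) (hf : BUC f) {ε C : ℝ}
    (hC : ∀ x y, |f (x + y) - f x| ≤ ε + C * ‖y‖) {ν : Measure (Ed d)} (hν : MemPp p ν) (x : Ed d) :
    |∫ y, f (x + y) ∂ν - f x| ≤ ε + C * ∫ y, ‖y‖ ∂ν := by
  have := hν.1
  have e : ∫ y, f (x + y) ∂ν - f x = ∫ y, (f (x + y) - f x) ∂ν := by
    rw [integral_sub (hf.integrable x ν) (integrable_const _)]; simp
  have hi := integrable_norm_of_memPp hp hν
  rw [e]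
  calc |∫ y, (f (x + y) - f x) ∂ν| ≤ ∫ y, (ε + C * ‖y‖) ∂ν := by
        rw [← Real.norm_eq_abs]
        refine norm_integral_le_of_norm_le ((integrable_const _).add (hi.const_mul C)) ?_
        filter_upwards with y; exact hC x y
    _ = _ := by
        rw [integral_add (integrable_const _) (hi.const_mul C), integral_const_mul]; simp

/-- short-time estimate -/
lemma Sop_short (hp : 1 < p) (hφ : IsPenalty p φ) {f : Ed d → ℝ}
    (hf : BUC f) {ε : ℝ} (hε : 0 < ε) : ∃ C K : ℝ, 0 ≤ C ∧ 0 ≤ K ∧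
      ∀ (t : ℝ) (μt : Measure (Ed d)), 0 ≤ t → MemPp p μt → ∀ x,
        f x - (ε + C * ∫ y, ‖y‖ ∂μt) ≤ ∫ y, f (x + y) ∂μt ∧
        Sop p φ μt t f x ≤ f x + (ε + C * (∫ y, ‖y‖ ∂μt) + t * K) := by
  obtain ⟨C, hC0, hC⟩ := hf.growth hε
  obtain ⟨K, hK0, hK⟩ := pen_superlinear hp hφ C hC0
  refine ⟨C, K, hC0, hK0, fun t μt ht hμt x => ⟨?_, ?_⟩⟩
  · have := (abs_le.mp (mean_dist hp hf hC hμt x)).1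
    linarith
  · refine Sop_le hp hφ hμt fun ν c hν hc hP => ?_
    have h1 := (abs_le.mp (mean_dist hp hf hC hν x)).2
    have h2 := mean_le hp hμt hν
    have h3 := hK t _ c ht (Wp_nonneg _ _ _) hc hP
    have h4 := mul_le_mul_of_nonneg_left h2 hC0
    linarith

lemma Sop_zero (hp : 1 < p) (hφ : IsPenalty p φ) {f : Ed d → ℝ}
    (hf : BUC f) : Sop p φ (Measure.dirac 0) 0 f = f := by
  ext x
  have key : ∀ ε > 0, |Sop p φ (Measure.dirac 0) 0 f x - f x| ≤ ε := by
    intro ε hε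
    obtain ⟨C, K, hC, hK, H⟩ := Sop_short hp hφ hf hε
    obtain ⟨h1, h2⟩ := H 0 (Measure.dirac 0) le_rfl (memPp_dirac hp) x
    have h3 := mean_le_Sop (t := 0) hp hφ (memPp_dirac hp) hf x
    simp only [integral_dirac, norm_zero, mul_zero, zero_mul, add_zero] at h1 h2 h3
    rw [abs_le]; constructor <;> linarith
  have := le_of_forall_pos_le_add (b := (0:ℝ)) (a := |Sop p φ (Measure.dirac 0) 0 f x - f x|)
    (fun ε hε => by simpa using key ε hε)
  have := abs_eq_zero.mp (le_antisymm this (abs_nonneg _))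
  linarith

set_option maxHeartbeats 1000000 in
lemma Sop_vanish (hp : 1 < p) (hφ : IsPenalty p φ) (ht : 0 ≤ t) (hμt : MemPp p μt) {f : Ed d → ℝ}
    (hf : BUC f) (h0 : Tendsto f (cocompact (Ed d)) (𝓝 0)) {ε : ℝ} (hε : 0 < ε) :
    ∃ R : ℝ, ∀ x : Ed d, R ≤ ‖x‖ → -ε ≤ ∫ y, f (x + y) ∂μt ∧ Sop p φ μt t f x ≤ ε := by
  obtain ⟨M, hM⟩ := hf.bdd
  have hM0 : 0 ≤ M := (abs_nonneg _).trans (hM 0)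
  obtain ⟨K, hK0, hK⟩ := pen_superlinear hp hφ 1 zero_le_one
  obtain ⟨R, hR⟩ : ∃ R : ℝ, ∀ x : Ed d, R ≤ ‖x‖ → |f x| ≤ ε / 2 := by
    have h1 : ∀ᶠ x in cocompact (Ed d), |f x| ≤ ε / 2 := by
      have := (Metric.tendsto_nhds.mp h0) (ε / 2) (by positivity)
      filter_upwards [this] with x hx
      rw [Real.dist_eq, sub_zero] at hx; exact hx.le
    rw [← Metric.cobounded_eq_cocompact] at h1
    obtain ⟨R, -, hR⟩ := (hasBasis_cobounded_norm (E := Ed d)).eventually_iff.mp h1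
    exact ⟨R, fun x hx => hR hx⟩
  obtain ⟨m, hm⟩ : ∃ m : ℝ, m = ∫ y, ‖y‖ ∂μt := ⟨_, rfl⟩
  have hm0 : 0 ≤ m := by rw [hm]; exact integral_nonneg fun y => norm_nonneg _
  obtain ⟨L, hL⟩ : ∃ L : ℝ, L = M + 1 + M * (m + t * K) * 2 / ε := ⟨_, rfl⟩
  have hL1 : M + 1 ≤ L := by
    have : 0 ≤ M * (m + t * K) * 2 / ε := by positivity
    linarith
  have hLpos : 0 < L := by linarith
  have hL2 : M / L * (m + t * K) ≤ ε / 2 := by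
    rw [div_mul_eq_mul_div, div_le_iff₀ hLpos]
    have : ε / 2 * (M * (m + t * K) * 2 / ε) = M * (m + t * K) := by field_simp
    have h3 : M * (m + t * K) * 2 / ε ≤ L := by linarith
    have h4 := mul_le_mul_of_nonneg_left h3 (show 0 ≤ ε / 2 by positivity)
    linarith
  have hL3 : M / L ≤ 1 := by rw [div_le_one hLpos]; linarith
  -- pointwise bound
  have pt : ∀ x : Ed d, R + L ≤ ‖x‖ → ∀ y, |f (x + y)| ≤ ε / 2 + M / L * ‖y‖ := by
    intro x hx y
    by_cases hy : R ≤ ‖x + y‖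
    · have := hR _ hy
      have : 0 ≤ M / L * ‖y‖ := by positivity
      linarith
    · push Not at hy
      have h1 : L ≤ ‖y‖ := by
        have : ‖x‖ ≤ ‖x + y‖ + ‖y‖ := by
          calc ‖x‖ = ‖(x + y) - y‖ := by congr 1; abel
            _ ≤ _ := norm_sub_le _ _
        linarith
      have h2 : M ≤ M / L * ‖y‖ := by
        rw [div_mul_eq_mul_div, le_div_iff₀ hLpos]; gcongr
      linarith [hM (x + y)]
  have bd : ∀ x : Ed d, R + L ≤ ‖x‖ → ∀ ν : Measure (Ed d), MemPp p ν →
      |∫ y, f (x + y) ∂ν| ≤ ε / 2 + M / L * ∫ y, ‖y‖ ∂ν := by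
    intro x hx ν hν
    have := hν.1
    have hi := integrable_norm_of_memPp hp hν
    calc |∫ y, f (x + y) ∂ν| ≤ ∫ y, (ε / 2 + M / L * ‖y‖) ∂ν := by
          rw [← Real.norm_eq_abs]
          refine norm_integral_le_of_norm_le ((integrable_const _).add (hi.const_mul _)) ?_
          filter_upwards with y; exact pt x hx y
      _ = _ := by
          rw [integral_add (integrable_const _) (hi.const_mul _), integral_const_mul]; simp
  have hML : 0 ≤ M / L := by positivity
  refine ⟨R + L, fun x hx => ⟨?_, ?_⟩⟩
  · have h1 := (abs_le.mp (bd x hx μt hμt)).1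
    have h2 : M / L * m ≤ M / L * (m + t * K) := by
      gcongr; have : 0 ≤ t * K := by positivity
      linarith
    rw [← hm] at h1
    linarith
  · refine Sop_le hp hφ hμt fun ν c hν hc hP => ?_
    have h1 := (abs_le.mp (bd x hx ν hν)).2
    have h2 := mean_le hp hμt hν
    have h3 := hK t _ c ht (Wp_nonneg _ _ _) hc hP
    have h4 : M / L * ∫ y, ‖y‖ ∂ν ≤ M / L * (m + t * K + c) := by
      gcongr; linarith
    have h5 : M / L * c ≤ c := by nlinarith
    linarith
end

open ProbabilityTheory in
/-- kernel selected by a countable index -/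
def pullK {α β : Type*} [MeasurableSpace α] [MeasurableSpace β] (γ : ℕ → Measure β) (q : α → ℕ)
    (hq : Measurable q) : Kernel α β :=
  ⟨fun u => γ (q u), measurable_from_nat.comp hq⟩

open ProbabilityTheory in
lemma pullK_apply {α β : Type*} [MeasurableSpace α] [MeasurableSpace β] (γ : ℕ → Measure β)
    (q : α → ℕ) (hq : Measurable q) (u : α) : pullK γ q hq u = γ (q u) := rfl

open ProbabilityTheory in
lemma pullK_markov {α β : Type*} [MeasurableSpace α] [MeasurableSpace β] (γ : ℕ → Measure β)
    (q : α → ℕ) (hq : Measurable q) (h : ∀ i, IsProbabilityMeasure (γ i)) :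
    IsMarkovKernel (pullK γ q hq) := ⟨fun u => h (q u)⟩

open ProbabilityTheory in
/-- law of `Y + Z` with `Y ~ ν1` and `Z ~ νi (q Y)` given `Y` -/
def mixLaw {d : ℕ} (ν1 : Measure (Ed d)) (νi : ℕ → Measure (Ed d)) (q : Ed d → ℕ)
    (hq : Measurable q) : Measure (Ed d) :=
  (ν1 ⊗ₘ (pullK νi q hq)).map (fun w => w.1 + w.2)

section
variable {d : ℕ} {p : ℝ}

lemma mixLaw_prob {ν1 : Measure (Ed d)} {νi : ℕ → Measure (Ed d)} {q : Ed d → ℕ}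
    (hq : Measurable q) [IsProbabilityMeasure ν1] (hi : ∀ i, IsProbabilityMeasure (νi i)) :
    IsProbabilityMeasure (mixLaw ν1 νi q hq) := by
  have := pullK_markov νi q hq hi
  unfold mixLaw
  exact Measure.isProbabilityMeasure_map (by fun_prop)

lemma lintegral_mixLaw {ν1 : Measure (Ed d)} {νi : ℕ → Measure (Ed d)} {q : Ed d → ℕ}
    (hq : Measurable q) [IsProbabilityMeasure ν1] (hi : ∀ i, IsProbabilityMeasure (νi i))
    {F : Ed d → ℝ≥0∞} (hF : Measurable F) :
    ∫⁻ w, F w ∂(mixLaw ν1 νi q hq) = ∫⁻ y, ∫⁻ z, F (y + z) ∂(νi (q y)) ∂ν1 := by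
  have := pullK_markov νi q hq hi
  unfold mixLaw
  rw [lintegral_map hF (by fun_prop), Measure.lintegral_compProd (by fun_prop)]
  rfl

lemma integral_mixLaw {ν1 : Measure (Ed d)} {νi : ℕ → Measure (Ed d)} {q : Ed d → ℕ}
    (hq : Measurable q) [IsProbabilityMeasure ν1] (hi : ∀ i, IsProbabilityMeasure (νi i))
    {f : Ed d → ℝ} (hf : BUC f) (x : Ed d) :
    Integrable (fun y => ∫ z, f (x + (y + z)) ∂(νi (q y))) ν1 ∧
    ∫ w, f (x + w) ∂(mixLaw ν1 νi q hq) = ∫ y, ∫ z, f (x + (y + z)) ∂(νi (q y)) ∂ν1 := by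
  have := pullK_markov νi q hq hi
  have := mixLaw_prob (ν1 := ν1) hq hi
  have hc := hf.uc.continuous
  have hI := hf.integrable x (mixLaw ν1 νi q hq)
  unfold mixLaw at hI ⊢
  rw [integrable_map_measure (by fun_prop) (by fun_prop)] at hI
  replace hI : Integrable (fun w : Ed d × Ed d => f (x + (w.1 + w.2)))
      (Measure.compProd ν1 (pullK νi q hq)) := hI
  refine ⟨?_, ?_⟩
  · obtain ⟨M, hM⟩ := hf.bdd
    have hm := StronglyMeasurable.integral_kernel_prod_right' (κ := pullK νi q hq)
      (f := fun w : Ed d × Ed d => f (x + (w.1 + w.2)))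
      (Continuous.stronglyMeasurable (by fun_prop))
    refine Integrable.of_bound (C := M) hm.aestronglyMeasurable ?_
    filter_upwards with y
    have h1 := abs_integral_le (f := f) hM (x + y) (νi (q y))
    simp only [add_assoc] at h1
    exact h1
  · rw [integral_map (by fun_prop) (by fun_prop), Measure.integral_compProd hI]
    rfl

open ProbabilityTheory in
lemma glue (hp : 1 < p) {μs μt ν1 : Measure (Ed d)} (hμs : MemPp p μs) (hμt : MemPp p μt)
    (hν1 : MemPp p ν1) {νi : ℕ → Measure (Ed d)} (hνi : ∀ i, MemPp p (νi i)) {q : Ed d → ℕ}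
    (hq : Measurable q) {B : ℝ} (hB : ∀ i, Wp p μt (νi i) ≤ B) {δ : ℝ} (hδ : 0 < δ) :
    ∃ γ : Measure (Ed d × Ed d), IsCoupling γ (μs.conv μt) (mixLaw ν1 νi q hq) ∧
      eLpNorm (fun q : Ed d × Ed d => q.2 - q.1) (ENNReal.ofReal p) γ ≤
        ENNReal.ofReal (Wp p μs ν1 +
          (eLpNorm (fun y => Wp p μt (νi (q y))) (ENNReal.ofReal p) ν1).toReal + 2 * δ) := by
  have := hμs.1
  have := hμt.1
  have := hν1.1
  have hνp := fun i => (hνi i).1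
  have hp1 : 1 ≤ ENNReal.ofReal p := by simpa using hp.le
  have hp0 : 0 < p := by linarith
  obtain ⟨γ1, hγ1, hc1⟩ := exists_coupling hp hμs hν1 hδ
  choose γi hγi hci using fun i => exists_coupling hp hμt (hνi i) hδ
  have := isProb_of_coupling hγ1
  have hγp : ∀ i, IsProbabilityMeasure (γi i) := fun i => isProb_of_coupling (hγi i)
  have hq2 : Measurable (fun u : Ed d × Ed d => q u.2) := hq.comp measurable_snd
  set κ := pullK γi (fun u : Ed d × Ed d => q u.2) hq2 with hκ
  have : IsMarkovKernel κ := pullK_markov _ _ _ hγp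
  set Γ := γ1 ⊗ₘ κ with hΓ
  have mT : Measurable (fun w : (Ed d × Ed d) × (Ed d × Ed d) => (w.1.1 + w.2.1, w.1.2 + w.2.2)) := by
    fun_prop
  refine ⟨Γ.map (fun w => (w.1.1 + w.2.1, w.1.2 + w.2.2)), ⟨?_, ?_⟩, ?_⟩
  · refine Measure.ext_of_lintegral _ fun F hF => ?_
    rw [lintegral_map hF (by fun_prop), lintegral_map (by fun_prop) mT,
      Measure.lintegral_compProd (by fun_prop), Measure.lintegral_conv hF]
    conv_rhs => rw [← hγ1.1]
    rw [lintegral_map (by fun_prop) (by fun_prop)]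
    refine lintegral_congr fun u => ?_
    simp only [hκ, pullK_apply]
    conv_rhs => rw [← (hγi (q u.2)).1]
    rw [lintegral_map (by fun_prop) (by fun_prop)]
  · refine Measure.ext_of_lintegral _ fun F hF => ?_
    rw [lintegral_map hF (by fun_prop), lintegral_map (by fun_prop) mT,
      Measure.lintegral_compProd (by fun_prop), lintegral_mixLaw hq hνp hF]
    have := pullK_markov νi q hq hνp
    have hm : Measurable (fun y => ∫⁻ z, F (y + z) ∂(νi (q y))) := by
      have := Measurable.lintegral_kernel_prod_right' (κ := pullK νi q hq)
        (f := fun w : Ed d × Ed d => F (w.1 + w.2)) (by fun_prop)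
      exact this
    conv_rhs => rw [← hγ1.2]
    rw [lintegral_map hm (by fun_prop)]
    refine lintegral_congr fun u => ?_
    simp only [hκ, pullK_apply]
    conv_rhs => rw [← (hγi (q u.2)).2]
    rw [lintegral_map (by fun_prop) (by fun_prop)]
  · rw [eLpNorm_map_measure (by fun_prop) (by fun_prop)]
    have e : ((fun q : Ed d × Ed d => q.2 - q.1) ∘
        fun w : (Ed d × Ed d) × (Ed d × Ed d) => (w.1.1 + w.2.1, w.1.2 + w.2.2)) =
        (fun w => w.1.2 - w.1.1) + (fun w => w.2.2 - w.2.1) := by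
      ext1 w
      simp only [Function.comp, Pi.add_apply]
      abel
    rw [e]
    refine (eLpNorm_add_le (by fun_prop) (by fun_prop) hp1).trans ?_
    have h1 : eLpNorm (fun w : (Ed d × Ed d) × (Ed d × Ed d) => w.1.2 - w.1.1) (ENNReal.ofReal p) Γ
        ≤ ENNReal.ofReal (Wp p μs ν1 + δ) := by
      refine le_trans (le_of_eq ?_) hc1
      have hfst : Γ.map Prod.fst = γ1 := by
        have : Γ.fst = γ1 := Measure.fst_compProd _ _
        exact this
      conv_rhs => rw [← hfst]
      rw [eLpNorm_map_measure (by fun_prop) (by fun_prop)]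
      rfl
    have mW : Measurable (fun y => Wp p μt (νi (q y))) :=
      (measurable_from_nat (f := fun i => Wp p μt (νi i))).comp hq
    have hWL : MemLp (fun y => Wp p μt (νi (q y))) (ENNReal.ofReal p) ν1 := by
      refine MemLp.of_bound mW.aestronglyMeasurable B ?_
      filter_upwards with y
      rw [Real.norm_of_nonneg (Wp_nonneg _ _ _)]; exact hB _
    have h2 : eLpNorm (fun w : (Ed d × Ed d) × (Ed d × Ed d) => w.2.2 - w.2.1) (ENNReal.ofReal p) Γ
        ≤ ENNReal.ofReal
          ((eLpNorm (fun y => Wp p μt (νi (q y))) (ENNReal.ofReal p) ν1).toReal + δ) := by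
      have a1 : eLpNorm (fun w : (Ed d × Ed d) × (Ed d × Ed d) => w.2.2 - w.2.1)
          (ENNReal.ofReal p) Γ ≤
          eLpNorm (fun y => Wp p μt (νi (q y)) + δ) (ENNReal.ofReal p) ν1 := by
        rw [eLpNorm_eq_lintegral_rpow_enorm_toReal (by simp; linarith) (by simp),
          eLpNorm_eq_lintegral_rpow_enorm_toReal (by simp; linarith) (by simp),
          ENNReal.toReal_ofReal hp0.le]
        gcongr ?_ ^ _
        rw [Measure.lintegral_compProd (by fun_prop)]
        conv_rhs => rw [← hγ1.2]
        rw [lintegral_map (by fun_prop) (by fun_prop)]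
        refine lintegral_mono fun u => ?_
        simp only [hκ, pullK_apply]
        have hh := hci (q u.2)
        rw [eLpNorm_eq_lintegral_rpow_enorm_toReal (by simp; linarith) (by simp),
          ENNReal.toReal_ofReal hp0.le] at hh
        have h3 := ENNReal.rpow_le_rpow hh hp0.le
        rw [← ENNReal.rpow_mul, one_div, inv_mul_cancel₀ hp0.ne', ENNReal.rpow_one] at h3
        refine h3.trans (le_of_eq ?_)
        rw [Real.enorm_of_nonneg (by have := Wp_nonneg p μt (νi (q u.2)); positivity)]
      refine a1.trans ?_
      have a2 : eLpNorm (fun y => Wp p μt (νi (q y)) + δ) (ENNReal.ofReal p) ν1 ≤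
          eLpNorm (fun y => Wp p μt (νi (q y))) (ENNReal.ofReal p) ν1 +
          eLpNorm (fun _ : Ed d => δ) (ENNReal.ofReal p) ν1 :=
        eLpNorm_add_le mW.aestronglyMeasurable (by fun_prop) hp1
      refine a2.trans ?_
      rw [ENNReal.ofReal_add ENNReal.toReal_nonneg hδ.le, ENNReal.ofReal_toReal hWL.2.ne]
      gcongr
      rw [eLpNorm_const _ (by simp; linarith) (IsProbabilityMeasure.ne_zero _)]
      simp [Real.enorm_of_nonneg hδ.le]
    refine (add_le_add h1 h2).trans (le_of_eq ?_)
    rw [← ENNReal.ofReal_add (by have := Wp_nonneg p μs ν1; positivity) (by positivity)]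
    congr 1; ring

lemma conv_memPp (hp : 1 < p) {μs μt : Measure (Ed d)} (hμs : MemPp p μs) (hμt : MemPp p μt) :
    MemPp p (μs.conv μt) := by
  have := hμs.1
  have := hμt.1
  apply memPp_of_memLp hp
  unfold Measure.conv
  rw [memLp_map_measure_iff (by fun_prop) (by fun_prop)]
  have h1 : MemLp (fun q : Ed d × Ed d => q.1) (ENNReal.ofReal p) (μs.prod μt) := by
    have := memLp_of_memPp hp hμs
    rw [show μs = (μs.prod μt).map Prod.fst by simp [Measure.map_fst_prod]] at this
    exact (memLp_map_measure_iff (g := fun x : Ed d => x) (by fun_prop) (by fun_prop)).mp this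
  have h2 : MemLp (fun q : Ed d × Ed d => q.2) (ENNReal.ofReal p) (μs.prod μt) := by
    have := memLp_of_memPp hp hμt
    rw [show μt = (μs.prod μt).map Prod.snd by simp [Measure.map_snd_prod]] at this
    exact (memLp_map_measure_iff (g := fun x : Ed d => x) (by fun_prop) (by fun_prop)).mp this
  exact h1.add h2

lemma memPp_of_coupling (hp : 1 < p) {μ ν : Measure (Ed d)} (hμ : MemPp p μ)
    [IsProbabilityMeasure ν] {γ : Measure (Ed d × Ed d)} (hγ : IsCoupling γ μ ν)
    (h : eLpNorm (fun q : Ed d × Ed d => q.2 - q.1) (ENNReal.ofReal p) γ < ∞) : MemPp p ν := by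
  apply memPp_of_memLp hp
  have h1 : MemLp (fun q : Ed d × Ed d => q.1) (ENNReal.ofReal p) γ := by
    have := memLp_of_memPp hp hμ
    rw [← hγ.1] at this
    exact (memLp_map_measure_iff (g := fun x : Ed d => x) (by fun_prop) (by fun_prop)).mp this
  have h2 : MemLp (fun q : Ed d × Ed d => q.2 - q.1) (ENNReal.ofReal p) γ := ⟨by fun_prop, h⟩
  rw [← hγ.2, memLp_map_measure_iff (by fun_prop) (by fun_prop)]
  have h3 := h1.add h2
  refine (memLp_congr_ae ?_).mp h3
  filter_upwards with q
  simp [Function.comp]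

lemma glue_Wp (hp : 1 < p) {μs μt ν1 : Measure (Ed d)} (hμs : MemPp p μs) (hμt : MemPp p μt)
    (hν1 : MemPp p ν1) {νi : ℕ → Measure (Ed d)} (hνi : ∀ i, MemPp p (νi i)) {q : Ed d → ℕ}
    (hq : Measurable q) {B : ℝ} (hB : ∀ i, Wp p μt (νi i) ≤ B) :
    MemPp p (mixLaw ν1 νi q hq) ∧ Wp p (μs.conv μt) (mixLaw ν1 νi q hq) ≤ Wp p μs ν1 +
          (eLpNorm (fun y => Wp p μt (νi (q y))) (ENNReal.ofReal p) ν1).toReal := by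
  have := hν1.1
  have := mixLaw_prob (ν1 := ν1) hq (fun i => (hνi i).1)
  refine ⟨?_, ?_⟩
  · obtain ⟨γ, h1, h2⟩ := glue hp hμs hμt hν1 hνi hq hB one_pos
    exact memPp_of_coupling hp (conv_memPp hp hμs hμt) h1 (h2.trans_lt (by simp))
  · refine le_of_forall_pos_le_add fun δ hδ => ?_
    obtain ⟨γ, h1, h2⟩ := glue hp hμs hμt hν1 hνi hq hB (half_pos hδ)
    have h3 := Wp_le hp h1 (by have := Wp_nonneg p μs ν1; positivity) h2
    linarith

lemma exists_cells {δ : ℝ} (hδ : 0 < δ) :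
    ∃ (u : ℕ → Ed d) (q : Ed d → ℕ), Measurable q ∧ ∀ y, ‖y - u (q y)‖ < δ := by
  classical
  have h : ∀ y : Ed d, ∃ n, ‖y - TopologicalSpace.denseSeq (Ed d) n‖ < δ := by
    intro y
    obtain ⟨n, hn⟩ := (TopologicalSpace.denseRange_denseSeq (Ed d)).exists_dist_lt y hδ
    exact ⟨n, by rwa [← dist_eq_norm]⟩
  refine ⟨TopologicalSpace.denseSeq (Ed d), fun y => Nat.find (h y), ?_, fun y => Nat.find_spec (h y)⟩
  refine measurable_find h fun k => ?_
  exact (isOpen_lt (by fun_prop) continuous_const).measurableSet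

lemma jensen_pen (hp : 1 < p) {φ : ℝ≥0 → ℝ≥0∞} (hφ : IsPenalty p φ) {t : ℝ} (ht : 0 < t)
    {ν1 : Measure (Ed d)} [IsProbabilityMeasure ν1] {a c : ℕ → ℝ} {q : Ed d → ℕ}
    (hq : Measurable q) (ha : ∀ i, 0 ≤ a i) (hc : ∀ i, 0 ≤ c i) {A C : ℝ} (hA : ∀ i, a i ≤ A)
    (hC : ∀ i, c i ≤ C) (hP : ∀ i, Pen φ t (a i) (c i)) :
    Pen φ t (eLpNorm (fun y => a (q y)) (ENNReal.ofReal p) ν1).toReal (∫ y, c (q y) ∂ν1) := by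
  have hp0 : 0 < p := by linarith
  rw [pen_pos_iff φ ht ENNReal.toReal_nonneg]
  have mz : Measurable (fun y => (((a (q y) / t) ^ p, c (q y) / t) : ℝ × ℝ)) :=
    (measurable_from_nat (f := fun i => (((a i / t) ^ p, c i / t) : ℝ × ℝ))).comp hq
  have hA0 : 0 ≤ A := (ha 0).trans (hA 0)
  have i1 : Integrable (fun y => (a (q y) / t) ^ p) ν1 := by
    refine Integrable.of_bound (C := (A / t) ^ p) mz.fst.aestronglyMeasurable ?_
    filter_upwards with y
    have := ha (q y)
    rw [Real.norm_of_nonneg (by positivity)]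
    gcongr
    exact hA _
  have i2 : Integrable (fun y => c (q y) / t) ν1 := by
    refine Integrable.of_bound (C := C / t) mz.snd.aestronglyMeasurable ?_
    filter_upwards with y
    have := hc (q y)
    rw [Real.norm_of_nonneg (by positivity)]
    gcongr
    exact hC _
  have key := (epi_convex hφ).integral_mem (μ := ν1) (epi_closed hp hφ)
    (f := fun y => (((a (q y) / t) ^ p, c (q y) / t) : ℝ × ℝ)) (by
      filter_upwards with y
      have h1 := ha (q y)
      have h2 := hc (q y)
      refine ⟨by simp only; positivity, by simp only; positivity, ?_⟩
      have h3 := (pen_pos_iff φ ht h1).mp (hP (q y))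
      simp only
      rw [Real.toNNReal_rpow_of_nonneg (by positivity), one_div, NNReal.rpow_rpow_inv hp0.ne']
      exact h3) (i1.prodMk i2)
  rw [integral_pair i1 i2] at key
  obtain ⟨h1, h2, h3⟩ := key
  simp only at h1 h2 h3
  rw [integral_div] at h3
  refine le_trans (le_of_eq ?_) h3
  congr 1
  rw [eLpNorm_eq_lintegral_rpow_enorm_toReal (by simp; linarith) (by simp),
    ENNReal.toReal_ofReal hp0.le]
  have e1 : ∫⁻ y, ‖a (q y)‖ₑ ^ p ∂ν1 = ENNReal.ofReal (∫ y, (a (q y)) ^ p ∂ν1) := by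
    have i3 : Integrable (fun y => (a (q y)) ^ p) ν1 := by
      have := i1.const_mul (t ^ p)
      refine this.congr ?_
      filter_upwards with y
      rw [← Real.mul_rpow ht.le (div_nonneg (ha _) ht.le)]
      congr 1; field_simp
    rw [ofReal_integral_eq_lintegral_ofReal i3
      (by filter_upwards with y; exact Real.rpow_nonneg (ha _) _)]
    refine lintegral_congr fun y => ?_
    rw [Real.enorm_of_nonneg (ha _), ENNReal.ofReal_rpow_of_nonneg (ha _) hp0.le]
  rw [e1]
  have hI : 0 ≤ ∫ y, (a (q y)) ^ p ∂ν1 := integral_nonneg fun y => Real.rpow_nonneg (ha _) _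
  rw [ENNReal.ofReal_rpow_of_nonneg hI (by positivity), ENNReal.toReal_ofReal (by positivity),
    ← Real.toNNReal_rpow_of_nonneg h1]
  congr 1
  have e2 : ∫ y, (a (q y) / t) ^ p ∂ν1 = (∫ y, (a (q y)) ^ p ∂ν1) / t ^ p := by
    rw [← integral_div]
    refine integral_congr_ae ?_
    filter_upwards with y
    rw [Real.div_rpow (ha _) ht.le]
  rw [e2, Real.div_rpow hI (by positivity), one_div, Real.rpow_rpow_inv ht.le hp0.ne']
end

section
variable {d : ℕ} {p : ℝ} {φ : ℝ≥0 → ℝ≥0∞}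

lemma Sop_comp_le (hp : 1 < p) (hφ : IsPenalty p φ) {μs μt : Measure (Ed d)} (hμs : MemPp p μs)
    (hμt : MemPp p μt) {s t : ℝ} (hs : 0 < s) (ht : 0 < t) {f : Ed d → ℝ} (hf : BUC f) (x : Ed d) :
    Sop p φ μs s (Sop p φ μt t f) x ≤ Sop p φ (μs.conv μt) (s + t) f x := by
  have hg : BUC (Sop p φ μt t f) := Sop_BUC hp hφ hμt hf
  obtain ⟨M, hM⟩ := hf.bdd
  have hgM : ∀ x, |Sop p φ μt t f x| ≤ M := Sop_bound hp hφ hμt hM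
  refine Sop_le hp hφ hμs fun ν1 c1 hν1 hc1 hP1 => ?_
  have := hν1.1
  refine le_of_forall_pos_le_add fun η hη => ?_
  obtain ⟨ε, hε, hη3⟩ : ∃ ε > 0, η = 3 * ε := ⟨η / 3, by positivity, by ring⟩
  obtain ⟨δ, hδ, H⟩ := hf.modulus hε
  obtain ⟨u, q, hq, hu⟩ := exists_cells (d := d) hδ
  choose νi ci hνi hci hPi hnear using
    fun i => exists_near (t := t) hp hφ hμt f (x + u i) hε
  have hνp := fun i => (hνi i).1
  obtain ⟨K, hK0, hK⟩ := pen_superlinear hp hφ 1 zero_le_one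
  have hCb : ∀ i, ci i ≤ 2 * M + ε := fun i => by
    have := hνp i
    have h1 := (abs_le.mp (abs_integral_le hM (x + u i) (νi i))).2
    have h2 := (abs_le.mp (hgM (x + u i))).1
    have h3 := hnear i
    linarith
  have hAb : ∀ i, Wp p μt (νi i) ≤ 2 * M + ε + t * K := fun i => by
    have := hK t _ _ ht.le (Wp_nonneg _ _ _) (hci i) (hPi i)
    linarith [hCb i]
  obtain ⟨hνP, hW⟩ := glue_Wp hp hμs hμt hν1 hνi hq hAb
  have hJ := jensen_pen (ν1 := ν1) hp hφ ht hq (fun i => Wp_nonneg p μt (νi i)) hci hAb hCb hPi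
  have hc0 : 0 ≤ ∫ y, ci (q y) ∂ν1 := integral_nonneg fun y => hci _
  have hPen := pen_mono hφ (by positivity) hW le_rfl
    (pen_add hφ hs ht (Wp_nonneg _ _ _) ENNReal.toReal_nonneg hc1 hc0 hP1 hJ)
  have hS := le_Sop hM x hνP (add_nonneg hc1 hc0) hPen
  obtain ⟨hInt, hE⟩ := integral_mixLaw (ν1 := ν1) hq hνp hf x
  rw [hE] at hS
  have ic : Integrable (fun y => ci (q y)) ν1 := by
    refine Integrable.of_bound (C := 2 * M + ε)
      ((measurable_from_nat (f := ci)).comp hq).aestronglyMeasurable ?_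
    filter_upwards with y
    rw [Real.norm_of_nonneg (hci _)]; exact hCb _
  have hpt : ∀ y, Sop p φ μt t f (x + y) ≤
      (∫ z, f (x + (y + z)) ∂(νi (q y))) - ci (q y) + 3 * ε := by
    intro y
    have := hνp (q y)
    have h1 := hnear (q y)
    have h2 := Sop_modulus (t := t) hp hφ hμt hf (H (y - u (q y)) (hu y)) (x + u (q y))
    rw [show x + u (q y) + (y - u (q y)) = x + y by abel] at h2
    have h3 : ∫ z, f (x + u (q y) + z) ∂(νi (q y)) ≤ ∫ z, (f (x + y + z) + ε) ∂(νi (q y)) := by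
      refine integral_mono (hf.integrable _ _) ((hf.integrable _ _).add (integrable_const _)) ?_
      intro z
      have := (abs_le.mp (H (y - u (q y)) (hu y) (x + u (q y) + z))).1
      rw [show x + u (q y) + z + (y - u (q y)) = x + y + z by abel] at this
      simp only
      linarith
    rw [integral_add (hf.integrable _ _) (integrable_const _)] at h3
    simp only [integral_const, probReal_univ, smul_eq_mul, one_mul] at h3
    simp only [← add_assoc]
    linarith [(abs_le.mp h2).2]
  have hfin : ∫ y, Sop p φ μt t f (x + y) ∂ν1 ≤
      ∫ y, ((∫ z, f (x + (y + z)) ∂(νi (q y))) - ci (q y) + 3 * ε) ∂ν1 :=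
    integral_mono (hg.integrable x ν1) ((hInt.sub ic).add (integrable_const _)) hpt
  have i3 : Integrable (fun y => (∫ z, f (x + (y + z)) ∂(νi (q y))) - ci (q y)) ν1 := hInt.sub ic
  rw [integral_add i3 (integrable_const _), integral_sub hInt ic] at hfin
  simp only [integral_const, probReal_univ, smul_eq_mul, one_mul] at hfin
  linarith

variable {μ : ℝ → Measure (Ed d)}

lemma Sop_semi (hp : 1 < p) (hφ : IsPenalty p φ) (hμ : IsConvSemigroup p μ) {s t : ℝ}
    (hs : 0 ≤ s) (ht : 0 ≤ t) {f : Ed d → ℝ} (hf : BUC f) (x : Ed d) :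
    Sop p φ (μ s) s (Sop p φ (μ t) t f) x ≤ Sop p φ (μ (s + t)) (s + t) f x := by
  obtain ⟨h0, hadd, hm⟩ := hμ
  rcases hs.eq_or_lt with rfl | hs'
  · rw [h0, Sop_zero hp hφ (Sop_BUC hp hφ (hm t ht) hf), zero_add]
  rcases ht.eq_or_lt with rfl | ht'
  · rw [h0, Sop_zero hp hφ hf, add_zero]
  rw [hadd s t hs ht]
  exact Sop_comp_le hp hφ (hm s hs) (hm t ht) hs' ht' hf x

lemma mean_semi (hp : 1 < p) (hφ : IsPenalty p φ) (hμ : IsConvSemigroup p μ) {s t : ℝ}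
    (hs : 0 ≤ s) (ht : 0 ≤ t) {f h : Ed d → ℝ} (hf : BUC f) (hh : BUC h)
    (H : ∀ x, ∫ y, f (x + y) ∂(μ t) ≤ h x) (x : Ed d) :
    ∫ y, f (x + y) ∂(μ (s + t)) ≤ Sop p φ (μ s) s h x := by
  obtain ⟨h0, hadd, hm⟩ := hμ
  have := (hm s hs).1
  have := (hm t ht).1
  have := (conv_memPp hp (hm s hs) (hm t ht)).1
  refine le_trans ?_ (mean_le_Sop hp hφ (hm s hs) hh x)
  have hI := hf.integrable x ((μ s).conv (μ t))
  rw [hadd s t hs ht, integral_conv hI]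
  refine integral_mono ?_ (hh.integrable x (μ s)) ?_
  · have hI2 : Integrable (fun w : Ed d × Ed d => f (x + (w.1 + w.2))) ((μ s).prod (μ t)) := by
      have hc := hf.uc.continuous
      obtain ⟨M, hM⟩ := hf.bdd
      exact Integrable.of_bound (C := M) (by fun_prop) (by filter_upwards with w; exact hM _)
    exact hI2.integral_prod_left
  · intro y
    simp only [← add_assoc]
    exact H (x + y)

/-- iterated operator -/
def It (p : ℝ) (φ : ℝ≥0 → ℝ≥0∞) (μ : ℝ → Measure (Ed d)) (h : ℝ) (k : ℕ)
    (f : Ed d → ℝ) : Ed d → ℝ := (fun g => Sop p φ (μ h) h g)^[k] f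

lemma It_zero (h : ℝ) (f : Ed d → ℝ) : It p φ μ h 0 f = f := rfl

lemma It_succ (h : ℝ) (k : ℕ) (f : Ed d → ℝ) :
    It p φ μ h (k + 1) f = Sop p φ (μ h) h (It p φ μ h k f) := by
  unfold It; rw [Function.iterate_succ_apply']

lemma It_add (h : ℝ) (j k : ℕ) (f : Ed d → ℝ) :
    It p φ μ h (j + k) f = It p φ μ h j (It p φ μ h k f) := by
  unfold It; rw [Function.iterate_add_apply]

lemma It_BUC (hp : 1 < p) (hφ : IsPenalty p φ) (hμ : IsConvSemigroup p μ) {h : ℝ} (hh : 0 ≤ h)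
    (k : ℕ) {f : Ed d → ℝ} (hf : BUC f) : BUC (It p φ μ h k f) := by
  induction k with
  | zero => exact hf
  | succ k ih => rw [It_succ]; exact Sop_BUC hp hφ (hμ.2.2 h hh) ih

lemma It_contr (hp : 1 < p) (hφ : IsPenalty p φ) (hμ : IsConvSemigroup p μ) {h : ℝ} (hh : 0 ≤ h)
    (k : ℕ) {f g : Ed d → ℝ} (hf : BUC f) (hg : BUC g) {ε : ℝ} (H : ∀ x, |f x - g x| ≤ ε) :
    ∀ x, |It p φ μ h k f x - It p φ μ h k g x| ≤ ε := by
  induction k with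
  | zero => exact H
  | succ k ih =>
    rw [It_succ, It_succ]
    exact Sop_contr hp hφ (hμ.2.2 h hh) (It_BUC hp hφ hμ hh k hf) (It_BUC hp hφ hμ hh k hg) ih

lemma It_mono (hp : 1 < p) (hφ : IsPenalty p φ) (hμ : IsConvSemigroup p μ) {h : ℝ} (hh : 0 ≤ h)
    (k : ℕ) {f g : Ed d → ℝ} (hf : BUC f) (hg : BUC g) (H : ∀ x, f x ≤ g x) :
    ∀ x, It p φ μ h k f x ≤ It p φ μ h k g x := by
  induction k with
  | zero => exact H
  | succ k ih =>
    rw [It_succ, It_succ]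
    exact Sop_mono hp hφ (hμ.2.2 h hh) (It_BUC hp hφ hμ hh k hf) (It_BUC hp hφ hμ hh k hg) ih

lemma It_modulus (hp : 1 < p) (hφ : IsPenalty p φ) (hμ : IsConvSemigroup p μ) {h : ℝ} (hh : 0 ≤ h)
    (k : ℕ) {f : Ed d → ℝ} (hf : BUC f) {v : Ed d} {ε : ℝ} (H : ∀ z, |f (z + v) - f z| ≤ ε) :
    ∀ z, |It p φ μ h k f (z + v) - It p φ μ h k f z| ≤ ε := by
  induction k with
  | zero => exact H
  | succ k ih =>
    rw [It_succ]
    exact Sop_modulus hp hφ (hμ.2.2 h hh) (It_BUC hp hφ hμ hh k hf) ih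

lemma It_le (hp : 1 < p) (hφ : IsPenalty p φ) (hμ : IsConvSemigroup p μ) {h : ℝ} (hh : 0 ≤ h)
    {r : ℝ} (hr : 0 ≤ r) (k : ℕ) {f : Ed d → ℝ} (hf : BUC f) :
    ∀ x, It p φ μ h k (Sop p φ (μ r) r f) x ≤
      Sop p φ (μ (k * h + r)) (k * h + r) f x := by
  induction k with
  | zero => intro x; simp [It_zero]
  | succ k ih =>
    intro x
    rw [It_succ]
    have hk : 0 ≤ k * h + r := by positivity
    refine (Sop_mono hp hφ (hμ.2.2 h hh) (It_BUC hp hφ hμ hh k (Sop_BUC hp hφ (hμ.2.2 r hr) hf))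
      (Sop_BUC hp hφ (hμ.2.2 _ hk) hf) ih x).trans ?_
    refine (Sop_semi hp hφ hμ hh hk hf x).trans (le_of_eq ?_)
    rw [show h + (k * h + r) = ((k + 1 : ℕ) : ℝ) * h + r by push_cast; ring]

lemma le_It (hp : 1 < p) (hφ : IsPenalty p φ) (hμ : IsConvSemigroup p μ) {h : ℝ} (hh : 0 ≤ h)
    {r : ℝ} (hr : 0 ≤ r) (k : ℕ) {f : Ed d → ℝ} (hf : BUC f) :
    ∀ x, ∫ y, f (x + y) ∂(μ (k * h + r)) ≤ It p φ μ h k (Sop p φ (μ r) r f) x := by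
  induction k with
  | zero =>
    intro x; simp only [It_zero, CharP.cast_eq_zero, zero_mul, zero_add]
    exact mean_le_Sop hp hφ (hμ.2.2 r hr) hf x
  | succ k ih =>
    intro x
    rw [It_succ]
    have hk : 0 ≤ k * h + r := by positivity
    have := mean_semi hp hφ hμ hh hk hf
      (It_BUC hp hφ hμ hh k (Sop_BUC hp hφ (hμ.2.2 r hr) hf)) ih x
    rwa [show h + (k * h + r) = ((k + 1 : ℕ) : ℝ) * h + r by push_cast; ring] at this

/-- step refinement -/
lemma It_refine (hp : 1 < p) (hφ : IsPenalty p φ) (hμ : IsConvSemigroup p μ) {h : ℝ} (hh : 0 ≤ h)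
    (k : ℕ) {f : Ed d → ℝ} (hf : BUC f) :
    ∀ x, It p φ μ h (2 * k) f x ≤ It p φ μ (2 * h) k f x := by
  have h2 : 0 ≤ 2 * h := by positivity
  induction k with
  | zero => intro x; exact le_rfl
  | succ k ih =>
    intro x
    rw [show 2 * (k + 1) = 2 * k + 1 + 1 by ring, It_succ, It_succ, It_succ]
    have b1 := It_BUC hp hφ hμ hh (2 * k) hf
    have b2 := It_BUC hp hφ hμ h2 k hf
    refine (Sop_semi hp hφ hμ hh hh b1 x).trans ?_
    rw [← two_mul]
    exact Sop_mono hp hφ (hμ.2.2 _ h2) b1 b2 ih x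

lemma SiterN_eq (n : ℕ) (t : ℝ) (f : Ed d → ℝ) :
    SiterN p φ μ n t f = It p φ μ ((2:ℝ)^n)⁻¹ ⌊(2:ℝ)^n * t⌋₊
      (Sop p φ (μ (t - ⌊(2:ℝ)^n * t⌋₊ * ((2:ℝ)^n)⁻¹)) (t - ⌊(2:ℝ)^n * t⌋₊ * ((2:ℝ)^n)⁻¹) f) := rfl

lemma rem_nonneg (n : ℕ) {t : ℝ} (ht : 0 ≤ t) : 0 ≤ t - ⌊(2:ℝ)^n * t⌋₊ * ((2:ℝ)^n)⁻¹ := by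
  have h1 := Nat.floor_le (show 0 ≤ (2:ℝ)^n * t by positivity)
  have h2 : (⌊(2:ℝ)^n * t⌋₊ : ℝ) * ((2:ℝ)^n)⁻¹ ≤ t := by
    rw [← div_eq_mul_inv, div_le_iff₀ (by positivity)]; linarith
  linarith

lemma SiterN_antitone (hp : 1 < p) (hφ : IsPenalty p φ) (hμ : IsConvSemigroup p μ) {t : ℝ}
    (ht : 0 ≤ t) {f : Ed d → ℝ} (hf : BUC f) (n : ℕ) (x : Ed d) :
    SiterN p φ μ (n + 1) t f x ≤ SiterN p φ μ n t f x := by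
  rw [SiterN_eq, SiterN_eq]
  have hr := rem_nonneg n ht
  have hr' := rem_nonneg (n+1) ht
  set k := ⌊(2:ℝ)^n * t⌋₊ with hk
  set k' := ⌊(2:ℝ)^(n+1) * t⌋₊ with hk'
  set h : ℝ := ((2:ℝ)^(n+1))⁻¹ with hh
  have hh0 : 0 ≤ h := by positivity
  have e2 : ((2:ℝ)^n)⁻¹ = 2 * h := by
    rw [hh, pow_succ]; field_simp
  rw [e2] at hr ⊢
  have b1 := Nat.floor_le (show 0 ≤ (2:ℝ)^n * t by positivity)
  have b2 := Nat.lt_floor_add_one ((2:ℝ)^n * t)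
  rw [← hk] at b1 b2
  have hcase : k' = 2 * k ∨ k' = 2 * k + 1 := by
    have c1 : 2 * k ≤ k' := by
      apply Nat.le_floor; push_cast; rw [pow_succ]; linarith
    have c2 : k' < 2 * k + 2 := by
      rw [hk', Nat.floor_lt (by positivity)]; push_cast; rw [pow_succ]; linarith
    omega
  have bS := Sop_BUC (t := t - k * (2 * h)) hp hφ (hμ.2.2 _ hr) hf
  have bS' := Sop_BUC (t := t - k' * h) hp hφ (hμ.2.2 _ hr') hf
  rcases hcase with hc | hc
  · rw [hc]
    push_cast
    rw [show t - 2 * (k:ℝ) * h = t - k * (2 * h) by ring]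
    exact It_refine hp hφ hμ hh0 k bS x
  · rw [hc] at hr' bS' ⊢
    rw [It_add]
    refine le_trans (It_mono hp hφ hμ hh0 (2 * k) (It_BUC hp hφ hμ hh0 1 bS') bS ?_ x)
      (It_refine hp hφ hμ hh0 k bS x)
    intro z
    rw [It_succ, It_zero]
    refine (Sop_semi hp hφ hμ hh0 hr' hf z).trans (le_of_eq ?_)
    rw [show h + (t - ((2 * k + 1 : ℕ) : ℝ) * h) = t - k * (2 * h) by push_cast; ring]

lemma SiterN_uniform (hp : 1 < p) (hφ : IsPenalty p φ) (hμ : IsConvSemigroup p μ) {t : ℝ}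
    (ht : 0 ≤ t) {f : Ed d → ℝ} (hf : BUC f) (h0 : Tendsto f (cocompact (Ed d)) (𝓝 0)) :
    TendstoUniformly (fun n x => SiterN p φ μ n t f x) (Slim p φ μ t f) atTop := by
  have hstep : ∀ n : ℕ, (0:ℝ) ≤ ((2:ℝ)^n)⁻¹ := fun n => by positivity
  have anti : ∀ x, Antitone (fun n => SiterN p φ μ n t f x) := fun x =>
    antitone_nat_of_succ_le fun n => SiterN_antitone hp hφ hμ ht hf n x
  have htime : ∀ n : ℕ, (⌊(2:ℝ)^n * t⌋₊ : ℝ) * ((2:ℝ)^n)⁻¹ +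
      (t - ⌊(2:ℝ)^n * t⌋₊ * ((2:ℝ)^n)⁻¹) = t := fun n => by ring
  have lower : ∀ n x, ∫ y, f (x + y) ∂(μ t) ≤ SiterN p φ μ n t f x := fun n x => by
    have := le_It hp hφ hμ (hstep n) (rem_nonneg n ht) ⌊(2:ℝ)^n * t⌋₊ hf x
    rwa [htime] at this
  have upper : ∀ n x, SiterN p φ μ n t f x ≤ Sop p φ (μ t) t f x := fun n x => by
    have := It_le hp hφ hμ (hstep n) (rem_nonneg n ht) ⌊(2:ℝ)^n * t⌋₊ hf x
    rwa [htime] at this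
  have conv : ∀ x, Tendsto (fun n => SiterN p φ μ n t f x) atTop (𝓝 (Slim p φ μ t f x)) := fun x =>
    tendsto_atTop_ciInf (anti x) ⟨_, by rintro _ ⟨n, rfl⟩; exact lower n x⟩
  have modu : ∀ (v : Ed d) (ε : ℝ), (∀ z, |f (z + v) - f z| ≤ ε) → ∀ n z,
      |SiterN p φ μ n t f (z + v) - SiterN p φ μ n t f z| ≤ ε := fun v ε H n => by
    rw [SiterN_eq]
    exact It_modulus hp hφ hμ (hstep n) _ (Sop_BUC hp hφ (hμ.2.2 _ (rem_nonneg n ht)) hf)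
      (Sop_modulus hp hφ (hμ.2.2 _ (rem_nonneg n ht)) hf H)
  have contN : ∀ n, Continuous (fun x => SiterN p φ μ n t f x) := fun n =>
    (It_BUC hp hφ hμ (hstep n) _ (Sop_BUC hp hφ (hμ.2.2 _ (rem_nonneg n ht)) hf)).uc.continuous
  have contL : Continuous (Slim p φ μ t f) := by
    refine (uc_of_modulus fun ε hε => ?_).continuous
    obtain ⟨δ, hδ, H⟩ := hf.modulus hε
    refine ⟨δ, hδ, fun v hv z => ?_⟩
    exact le_of_tendsto ((conv (z + v)).sub (conv z)).abs
      (Eventually.of_forall fun n => modu v ε (H v hv) n z)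
  have hloc : TendstoLocallyUniformly (fun n x => SiterN p φ μ n t f x) (Slim p φ μ t f) atTop :=
    Antitone.tendstoLocallyUniformly_of_forall_tendsto contN
      (fun m n hmn x => anti x hmn) contL conv
  rw [Metric.tendstoUniformly_iff]
  intro ε hε
  obtain ⟨R, hR⟩ := Sop_vanish hp hφ ht (hμ.2.2 t ht) hf h0 (show 0 < ε / 3 by positivity)
  have hc : IsCompact (Metric.closedBall (0 : Ed d) R) := isCompact_closedBall _ _
  have hu := (tendstoLocallyUniformlyOn_iff_tendstoUniformlyOn_of_compact hc).mp
    hloc.tendstoLocallyUniformlyOn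
  rw [Metric.tendstoUniformlyOn_iff] at hu
  filter_upwards [hu ε hε] with n hn x
  by_cases hx : ‖x‖ ≤ R
  · exact hn x (by simpa using hx)
  · push Not at hx
    obtain ⟨h1, h2⟩ := hR x hx.le
    have a1 := lower n x
    have a2 := upper n x
    have a3 : ∫ y, f (x + y) ∂(μ t) ≤ Slim p φ μ t f x :=
      ge_of_tendsto (conv x) (Eventually.of_forall fun n => lower n x)
    have a4 : Slim p φ μ t f x ≤ Sop p φ (μ t) t f x :=
      le_of_tendsto (conv x) (Eventually.of_forall fun n => upper n x)
    rw [Real.dist_eq, abs_lt]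
    constructor <;> linarith
end

lemma C0_BUC {d : ℕ} (g : C₀(Ed d, ℝ)) : BUC (⇑g) := by
  refine ⟨⟨‖g‖, fun x => ?_⟩, ?_⟩
  · exact (ZeroAtInftyContinuousMap.toBCF g).norm_coe_le_norm x
  · exact ZeroAtInftyContinuousMap.uniformContinuous g

lemma mean_small {d : ℕ} {p : ℝ} (hp : 1 < p) {μ : ℝ → Measure (Ed d)} (hμ : IsConvSemigroup p μ)
    (hμ0 : WContinuousAtZero p μ) {ε : ℝ} (hε : 0 < ε) :
    ∃ δ > 0, ∀ s, 0 ≤ s → s < δ → ∫ y, ‖y‖ ∂(μ s) ≤ ε := by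
  have h1 : ∀ᶠ s in 𝓝[>] (0:ℝ), Wp p (μ s) (Measure.dirac 0) < ε := hμ0.eventually_lt_const hε
  obtain ⟨δ, hδ, H⟩ := mem_nhdsGT_iff_exists_Ioo_subset.mp h1
  refine ⟨δ, hδ, fun s hs hsδ => ?_⟩
  rcases hs.eq_or_lt with rfl | hs'
  · rw [hμ.1]; simp; exact hε.le
  · exact (mean_le_Wp_dirac hp (hμ.2.2 s hs)).trans (le_of_lt (H ⟨hs', hsδ⟩))

lemma SiterN_short {d : ℕ} {p : ℝ} (hp : 1 < p) {φ : ℝ≥0 → ℝ≥0∞} (hφ : IsPenalty p φ)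
    {μ : ℝ → Measure (Ed d)} (hμ : IsConvSemigroup p μ) (hμ0 : WContinuousAtZero p μ)
    {g : Ed d → ℝ} (hg : BUC g) {ε : ℝ} (hε : 0 < ε) :
    ∃ δ > 0, ∀ (h r : ℝ) (k : ℕ), 0 ≤ h → 0 ≤ r → k * h + r < δ →
      ∀ x, |It p φ μ h k (Sop p φ (μ r) r g) x - g x| ≤ ε := by
  obtain ⟨C, K, hC, hK, H⟩ := Sop_short hp hφ hg (show 0 < ε / 3 by positivity)
  obtain ⟨δ1, hδ1, H1⟩ := mean_small hp hμ hμ0 (show 0 < ε / 3 / (C + 1) by positivity)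
  refine ⟨min δ1 (ε / 3 / (K + 1)), by positivity, fun h r k hh hr hlt x => ?_⟩
  have hs : 0 ≤ k * h + r := by positivity
  have h1 := H1 _ hs (hlt.trans_le (min_le_left _ _))
  have h2 : k * h + r ≤ ε / 3 / (K + 1) := (hlt.trans_le (min_le_right _ _)).le
  obtain ⟨h3, h4⟩ := H _ (μ (k * h + r)) hs (hμ.2.2 _ hs) x
  have l := le_It hp hφ hμ hh hr k hg x
  have u := It_le hp hφ hμ hh hr k hg x
  have m0 : 0 ≤ ∫ y, ‖y‖ ∂(μ (k * h + r)) := integral_nonneg fun y => norm_nonneg _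
  rw [le_div_iff₀ (by positivity)] at h1 h2
  rw [abs_le]
  constructor <;> nlinarith

/-- if `tₙ ∈ 2⁻ⁿℕ₀`, `tₙ ≤ t`, `tₙ → t`, and `‖gₙ − g‖_∞ → 0`, then
`‖𝒮ⁿ(tₙ)gₙ − 𝒮(t)g‖_∞ → 0`. -/
theorem stmt_10 (d : ℕ) (hd : 1 ≤ d) (p : ℝ) (hp : 1 < p)
    (φ : ℝ≥0 → ℝ≥0∞) (hφ : IsPenalty p φ)
    (μ : ℝ → Measure (Ed d)) (hμ : IsConvSemigroup p μ) (hμ0 : WContinuousAtZero p μ)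
    (t : ℝ) (ht : 0 ≤ t) (tseq : ℕ → ℝ)
    (hdyadic : ∀ n, ∃ k : ℕ, tseq n = (k : ℝ) / 2 ^ n)
    (hle : ∀ n, tseq n ≤ t) (hlim : Tendsto tseq atTop (𝓝 t))
    (g : C₀(Ed d, ℝ)) (gseq : ℕ → C₀(Ed d, ℝ))
    (hg : Tendsto (fun n => ‖gseq n - g‖) atTop (𝓝 0)) :
    TendstoUniformly (fun n x => SiterN p φ μ n (tseq n) (⇑(gseq n)) x)
      (Slim p φ μ t (⇑g)) atTop := by
  rw [Metric.tendstoUniformly_iff]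
  intro ε hε
  have hgB := C0_BUC g
  obtain ⟨δ, hδ, H⟩ := SiterN_short hp hφ hμ hμ0 hgB (show 0 < ε / 4 by positivity)
  have hU := SiterN_uniform hp hφ hμ ht hgB (zero_at_infty g)
  rw [Metric.tendstoUniformly_iff] at hU
  have hgs : ∀ᶠ n in atTop, ‖gseq n - g‖ < ε / 4 := hg.eventually_lt_const (by positivity)
  have hts : ∀ᶠ n in atTop, t - δ < tseq n := hlim.eventually_const_lt (by linarith)
  filter_upwards [hU (ε / 4) (by positivity), hgs, hts] with n h1 h2 h3 x
  obtain ⟨j, hj⟩ := hdyadic n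
  have hpos : (0:ℝ) < 2 ^ n := by positivity
  have hh : (0:ℝ) ≤ ((2:ℝ) ^ n)⁻¹ := by positivity
  have hjm : (2:ℝ) ^ n * tseq n = j := by rw [hj]; field_simp
  have hE : SiterN p φ μ n (tseq n) (⇑(gseq n)) = It p φ μ ((2:ℝ)^n)⁻¹ j (⇑(gseq n)) := by
    have h0 : tseq n - (j:ℝ) * ((2:ℝ)^n)⁻¹ = 0 := by rw [hj]; ring
    rw [SiterN_eq, hjm, Nat.floor_natCast, h0, hμ.1, Sop_zero hp hφ (C0_BUC (gseq n))]
  have hr := rem_nonneg n ht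
  have hjk : j ≤ ⌊(2:ℝ)^n * t⌋₊ := by
    apply Nat.le_floor
    rw [← hjm]
    exact mul_le_mul_of_nonneg_left (hle n) hpos.le
  have hF := SiterN_eq (p := p) (φ := φ) (μ := μ) n t (⇑g)
  obtain ⟨m, hm⟩ := Nat.exists_eq_add_of_le hjk
  rw [hm] at hF hr
  rw [It_add] at hF
  have hB : BUC (Sop p φ (μ (t - ((j + m : ℕ) : ℝ) * ((2:ℝ)^n)⁻¹))
      (t - ((j + m : ℕ) : ℝ) * ((2:ℝ)^n)⁻¹) (⇑g)) := Sop_BUC hp hφ (hμ.2.2 _ hr) hgB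
  have hlt : (m:ℝ) * ((2:ℝ)^n)⁻¹ + (t - ((j + m : ℕ) : ℝ) * ((2:ℝ)^n)⁻¹) < δ := by
    have : tseq n = (j:ℝ) * ((2:ℝ)^n)⁻¹ := by rw [hj]; ring
    push_cast
    nlinarith
  have hS := H _ _ m hh hr hlt
  have a1 := It_contr hp hφ hμ hh j (It_BUC hp hφ hμ hh m hB) hgB hS x
  have hn : ∀ y, |gseq n y - g y| ≤ ε / 4 := fun y =>
    ((ZeroAtInftyContinuousMap.toBCF (gseq n - g)).norm_coe_le_norm y).trans h2.le
  have a2 := It_contr hp hφ hμ hh j (C0_BUC (gseq n)) hgB hn x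
  have a3 := h1 x
  rw [hF] at a3
  rw [hE]
  rw [Real.dist_eq] at a3 ⊢
  rw [abs_lt] at a3 ⊢
  rw [abs_le] at a1 a2
  constructor <;> linarith [a1.1, a1.2, a2.1, a2.2, a3.1, a3.2]
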